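/- Let $R_0$ be a Gorenstein domain, $\mathfrak{f} \geq 4$, $A = R/\operatorname{Pf}_4(\mathbf{X})$ with $R = R_0[x_{i,j}]$, and $N$ the image of $\mathbf{X}$ on $A^{\mathfrak f}$. Then $\operatorname{Ext}^i_A(N, A) = 0$ for all $i > 0$; consequently, splicing a free resolution of $N$ over $A$ with the dual of a free resolution of $N^* \cong N$ yields a totally acyclic complex of free $A$-modules. -/

import Mathlib

open CategoryTheory
set_option synthInstance.maxHeartbeats 1000000
set_option maxHeartbeats 4000000

noncomputable section
namespace AluffiStmt

universe u

/-- The index set for the entries of a generic `f × f` alternating matrix: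
pairs `(i, j)` with `i < j`. -/
abbrev P2 (f : ℕ) := {p : Fin f × Fin f // p.1 < p.2}

/-- `l` is a (weakly) regular sequence on `R`: each entry is a nonzerodivisor
modulo the ideal generated by the previous entries. -/
def IsRegSeq (R : Type*) [CommRing R] (l : List R) : Prop :=
  ∀ (i : ℕ) (h : i < l.length) (x : R),
    l.get ⟨i, h⟩ * x ∈ Ideal.span {y | y ∈ l.take i} →
      x ∈ Ideal.span {y | y ∈ l.take i}

/-- The grade of an ideal: the supremum of lengths of regular sequences on `R`
contained in `I`. -/
def grade {R : Type*} [CommRing R] (I : Ideal R) : ℕ :=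
  sSup {n | ∃ l : List R, l.length = n ∧ (∀ r ∈ l, r ∈ I) ∧ IsRegSeq R l}

/-- Projective dimension at most `n`, expressed by vanishing of `Ext^i (M, -)`
for all `i > n`. -/
def projDimLE (R : Type u) [CommRing R] (M : ModuleCat.{u} R) (n : ℕ) : Prop :=
  ∀ (N : ModuleCat.{u} R) (i : ℕ), n < i →
    Subsingleton (((Ext R (ModuleCat.{u} R) i).obj (Opposite.op M)).obj N)

/-- `M` has projective dimension exactly `n`. -/
def projDimEq (R : Type u) [CommRing R] (M : ModuleCat.{u} R) (n : ℕ) : Prop :=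
  projDimLE R M n ∧ ∀ k : ℕ, projDimLE R M k → n ≤ k

/-- An ideal `I` is perfect if `grade I = pd_R (R/I)`. -/
def IsPerfectIdeal (R : Type u) [CommRing R] (I : Ideal R) : Prop :=
  projDimEq R (ModuleCat.of R (R ⧸ I)) (grade I)
/-- The `(i,j)` entry of the generic alternating matrix `X`. -/
def xv (R₀ : Type u) [CommRing R₀] (f : ℕ) (i j : Fin f) : MvPolynomial (P2 f) R₀ :=
  if h : i < j then MvPolynomial.X ⟨(i, j), h⟩
  else if h : j < i then - MvPolynomial.X ⟨(j, i), h⟩ else 0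

/-- The Pfaffian of the principal `4 × 4` submatrix of `X` with rows and
columns `i < j < k < l`. -/
def pf4 (R₀ : Type u) [CommRing R₀] (f : ℕ) (i j k l : Fin f) : MvPolynomial (P2 f) R₀ :=
  xv R₀ f i j * xv R₀ f k l - xv R₀ f i k * xv R₀ f j l + xv R₀ f i l * xv R₀ f j k

/-- The ideal `Pf₄(X)` generated by all `4 × 4` principal Pfaffians of the
generic alternating matrix `X`. -/
def Pf4 (R₀ : Type u) [CommRing R₀] (f : ℕ) : Ideal (MvPolynomial (P2 f) R₀) :=
  Ideal.span {p | ∃ i j k l : Fin f, i < j ∧ j < k ∧ k < l ∧ p = pf4 R₀ f i j k l}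
/-- Self-injective dimension at most `n`: `Ext^i(-, R)` vanishes for `i > n`. -/
def selfInjDimLE (R : Type u) [CommRing R] (n : ℕ) : Prop :=
  ∀ (M : ModuleCat.{u} R) (i : ℕ), n < i →
    Subsingleton (((Ext R (ModuleCat.{u} R) i).obj (Opposite.op M)).obj (ModuleCat.of R R))

/-- A ring is Gorenstein if it is Noetherian and every localization at a prime
has finite self-injective dimension. -/
def IsGorensteinRing (R : Type u) [CommRing R] : Prop :=
  IsNoetherianRing R ∧ ∀ (P : Ideal R) [P.IsPrime],
    ∃ n : ℕ, selfInjDimLE (Localization.AtPrime P) n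

/-- The generic alternating matrix with entries in `A = R/Pf₄(X)`. -/
def XA (R₀ : Type u) [CommRing R₀] (f : ℕ) :
    Matrix (Fin f) (Fin f) (MvPolynomial (P2 f) R₀ ⧸ Pf4 R₀ f) :=
  fun i j => Ideal.Quotient.mk _ (xv R₀ f i j)

/-- `N` = the image of `X` acting on `A^f`, as an `A`-module. -/
def NA (R₀ : Type u) [CommRing R₀] (f : ℕ) :
    Submodule (MvPolynomial (P2 f) R₀ ⧸ Pf4 R₀ f)
      (Fin f → MvPolynomial (P2 f) R₀ ⧸ Pf4 R₀ f) :=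
  LinearMap.range (XA R₀ f).mulVecLin

/-! ### Combinatorics of cells -/

/-- The cells `(i,j)` with `i < j < f`. -/
def cells (f : ℕ) : Finset (ℕ × ℕ) :=
  ((Finset.range f) ×ˢ (Finset.range f)).filter (fun c => c.1 < c.2)

lemma mem_cells {f : ℕ} {c : ℕ × ℕ} : c ∈ cells f ↔ c.1 < c.2 ∧ c.2 < f := by
  simp only [cells, Finset.mem_filter, Finset.mem_product, Finset.mem_range]
  constructor
  · rintro ⟨⟨_, h⟩, h2⟩; exact ⟨h2, h⟩
  · rintro ⟨h, h2⟩; exact ⟨⟨by omega, h2⟩, h⟩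

/-- Monomial attached to a multiset of cells. -/
def xm {A : Type*} [CommRing A] (x : ℕ × ℕ → A) (C : Multiset (ℕ × ℕ)) : A := (C.map x).prod

@[simp] lemma xm_zero {A : Type*} [CommRing A] (x : ℕ × ℕ → A) : xm x 0 = 1 := by simp [xm]

@[simp] lemma xm_cons {A : Type*} [CommRing A] (x : ℕ × ℕ → A) (c : ℕ × ℕ)
    (C : Multiset (ℕ × ℕ)) : xm x (c ::ₘ C) = x c * xm x C := by simp [xm]

lemma xm_add {A : Type*} [CommRing A] (x : ℕ × ℕ → A)
    (C D : Multiset (ℕ × ℕ)) : xm x (C + D) = xm x C * xm x D := by simp [xm]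

/-- Sum of all the cell variables of a given rank. -/
def th {A : Type*} [CommRing A] (x : ℕ × ℕ → A) (f r : ℕ) : A :=
  ∑ c ∈ (cells f).filter (fun c => c.1 + c.2 = r), x c

/-- The Pfaffian relations. -/
def Pfr {A : Type*} [CommRing A] (f : ℕ) (x : ℕ × ℕ → A) : Prop :=
  ∀ i j k l, i < j → j < k → k < l → l < f →
    x (i, l) * x (j, k) = x (i, k) * x (j, l) - x (i, j) * x (k, l)

/-- The strict chains of inner cells: index set of the basis. -/
def isB (f : ℕ) (b : Finset (ℕ × ℕ)) : Prop :=
  (∀ c ∈ b, 1 ≤ c.1 ∧ c.1 < c.2 ∧ c.2 + 2 ≤ f) ∧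
  ∀ c ∈ b, ∀ d ∈ b, c ≠ d → (c.1 < d.1 ∧ c.2 < d.2) ∨ (d.1 < c.1 ∧ d.2 < c.2)

lemma isB.sub {f : ℕ} {b : Finset (ℕ × ℕ)} (h : isB f b) : b ⊆ cells f := by
  intro c hc
  have := h.1 c hc
  rw [mem_cells]; omega

/-- Potential of a cell. -/
def ph (f : ℕ) (c : ℕ × ℕ) : ℕ := f * (c.1 + c.2) ^ 2 + c.1

/-- Potential of a multiset. -/
def Ph (f : ℕ) (C : Multiset (ℕ × ℕ)) : ℕ := (C.map (ph f)).sum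

@[simp] lemma Ph_cons (f : ℕ) (c : ℕ × ℕ) (C : Multiset (ℕ × ℕ)) :
    Ph f (c ::ₘ C) = ph f c + Ph f C := by simp [Ph]

lemma Ph_le (f : ℕ) (C : Multiset (ℕ × ℕ)) (h : ∀ c ∈ C, c ∈ cells f) :
    Ph f C ≤ Multiset.card C * (f * (2 * f) ^ 2 + f) := by
  have := Multiset.sum_le_card_nsmul (C.map (ph f)) (f * (2 * f) ^ 2 + f) (by
    intro a ha
    obtain ⟨c, hc, rfl⟩ := Multiset.mem_map.1 ha
    have := mem_cells.1 (h c hc)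
    unfold ph
    gcongr <;> omega)
  simpa [Ph] using this

lemma rewrite_nested {A : Type*} [CommRing A] (x : ℕ × ℕ → A) (f : ℕ) (hP : Pfr f x)
    (Q : AddSubgroup A) (m N : ℕ)
    (IH : ∀ D : Multiset (ℕ × ℕ), (∀ c ∈ D, c ∈ cells f) → Multiset.card D = m →
      N < Ph f D → xm x D ∈ Q)
    (c p : ℕ × ℕ) (E : Multiset (ℕ × ℕ)) (hc : c ∈ cells f) (hp : p ∈ cells f)
    (hE : ∀ c ∈ E, c ∈ cells f) (hm : Multiset.card E + 2 = m)
    (h1 : c.1 < p.1) (h2 : p.2 < c.2) (hN : N < ph f c + ph f p + Ph f E + 2 * f) :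
    x c * (x p * xm x E) ∈ Q := by
  obtain ⟨i, l⟩ := c
  obtain ⟨j, k⟩ := p
  rw [mem_cells] at hc hp
  simp only at *
  have e : x (i, l) * (x (j, k) * xm x E) =
      xm x ((i, k) ::ₘ (j, l) ::ₘ E) - xm x ((i, j) ::ₘ (k, l) ::ₘ E) := by
    rw [← mul_assoc, hP i j k l h1 hp.1 h2 hc.2]
    simp only [xm_cons]; ring
  rw [e]
  obtain ⟨a, rfl⟩ := Nat.exists_eq_add_of_lt h1
  obtain ⟨b, rfl⟩ := Nat.exists_eq_add_of_lt hp.1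
  obtain ⟨d, rfl⟩ := Nat.exists_eq_add_of_lt h2
  refine Q.sub_mem (IH _ ?_ ?_ ?_) (IH _ ?_ ?_ ?_)
  · intro c hc
    simp only [Multiset.mem_cons] at hc
    rcases hc with rfl | rfl | hc
    · rw [mem_cells]; constructor <;> simp only <;> omega
    · rw [mem_cells]; constructor <;> simp only <;> omega
    · exact hE c hc
  · simp only [Multiset.card_cons]; omega
  · refine lt_of_lt_of_le hN ?_
    simp only [Ph_cons, ph]
    nlinarith [Nat.zero_le (f * a), Nat.zero_le (f * d), Nat.zero_le (f * a * d)]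
  · intro c hc
    simp only [Multiset.mem_cons] at hc
    rcases hc with rfl | rfl | hc
    · rw [mem_cells]; constructor <;> simp only <;> omega
    · rw [mem_cells]; constructor <;> simp only <;> omega
    · exact hE c hc
  · simp only [Multiset.card_cons]; omega
  · refine lt_of_lt_of_le hN ?_
    simp only [Ph_cons, ph]
    nlinarith [Nat.zero_le (f * a), Nat.zero_le (f * d), Nat.zero_le (f * a * d),
      Nat.zero_le (f * b * d), Nat.zero_le (f * b), Nat.zero_le (f * a * b),
      Nat.zero_le (f * b * b)]

lemma rewrite_exchange {A : Type*} [CommRing A] (x : ℕ × ℕ → A) (f : ℕ)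
    (Q : AddSubgroup A) (m : ℕ) (c : ℕ × ℕ) (D : Multiset (ℕ × ℕ)) (hc : c ∈ cells f)
    (hD : ∀ c ∈ D, c ∈ cells f) (hm : Multiset.card D + 1 = m)
    (hth : th x f (c.1 + c.2) * xm x D ∈ Q)
    (IH : ∀ E : Multiset (ℕ × ℕ), (∀ c ∈ E, c ∈ cells f) → Multiset.card E = m →
      Ph f (c ::ₘ D) < Ph f E → xm x E ∈ Q)
    (hlow : ∀ c' ∈ cells f, c'.1 + c'.2 = c.1 + c.2 → c'.1 < c.1 → x c' * xm x D ∈ Q) :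
    xm x (c ::ₘ D) ∈ Q := by
  have hmem : c ∈ (cells f).filter (fun d => d.1 + d.2 = c.1 + c.2) := by simp [hc]
  have e : xm x (c ::ₘ D) = th x f (c.1 + c.2) * xm x D -
      ∑ d ∈ ((cells f).filter (fun d => d.1 + d.2 = c.1 + c.2)).erase c, x d * xm x D := by
    rw [th, ← Finset.add_sum_erase _ _ hmem, add_mul, Finset.sum_mul, xm_cons]; ring
  rw [e]
  refine Q.sub_mem hth (Q.sum_mem ?_)
  intro d hd
  simp only [Finset.mem_erase, Finset.mem_filter] at hd
  obtain ⟨hne, hd, hr⟩ := hd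
  rcases lt_trichotomy d.1 c.1 with h | h | h
  · exact hlow d hd hr h
  · exact absurd (Prod.ext h (by omega)) hne
  · rw [← xm_cons]
    refine IH _ ?_ ?_ ?_
    · intro a ha
      rcases Multiset.mem_cons.1 ha with rfl | ha
      · exact hd
      · exact hD a ha
    · simp [hm]
    · simp only [Ph_cons, ph, hr]; omega

theorem rewriteAll {A : Type*} [CommRing A] (x : ℕ × ℕ → A) (f : ℕ) (hP : Pfr f x)
    (Q : ℕ → AddSubgroup A)
    (hth : ∀ m r a, 1 ≤ r → r + 3 ≤ 2 * f → a ∈ Q m → th x f r * a ∈ Q (m + 1))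
    (hB : ∀ b, isB f b → xm x b.val ∈ Q b.card ∨ ∃ c ∈ b, ∀ c' ∈ cells f,
      c'.1 + c'.2 = c.1 + c.2 → c'.1 < c.1 → x c' * xm x (b.val.erase c) ∈ Q b.card) :
    ∀ (m : ℕ) (C : Multiset (ℕ × ℕ)), (∀ c ∈ C, c ∈ cells f) → Multiset.card C = m →
      xm x C ∈ Q m := by
  intro m
  induction m with
  | zero =>
    intro C _ hm
    rw [Multiset.card_eq_zero] at hm
    subst hm
    rcases hB ∅ ⟨by simp, by simp⟩ with h | ⟨c, hc, _⟩
    · simpa using h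
    · simp at hc
  | succ m ihm =>
    have key : ∀ (k : ℕ) (C : Multiset (ℕ × ℕ)), (∀ c ∈ C, c ∈ cells f) →
        Multiset.card C = m + 1 → (m + 1) * (f * (2 * f) ^ 2 + f) - Ph f C < k →
        xm x C ∈ Q (m + 1) := by
      intro k
      induction k with
      | zero => intro C _ _ h; omega
      | succ k ihk =>
        intro C hC hm hk
        have IH : ∀ D : Multiset (ℕ × ℕ), (∀ c ∈ D, c ∈ cells f) → Multiset.card D = m + 1 →
            Ph f C < Ph f D → xm x D ∈ Q (m + 1) := by
          intro D hD hDm hlt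
          refine ihk D hD hDm ?_
          have := Ph_le f D hD
          rw [hDm] at this
          omega
        -- exchange principle
        have EX : ∀ c ∈ C, (∀ c' ∈ cells f, c'.1 + c'.2 = c.1 + c.2 → c'.1 < c.1 →
            x c' * xm x (C.erase c) ∈ Q (m + 1)) → xm x C ∈ Q (m + 1) := by
          intro c hc hlow
          have hCe := Multiset.cons_erase hc
          have hcard : Multiset.card (C.erase c) + 1 = m + 1 := by
            rw [← hm, ← hCe]; simp
          have hD : ∀ d ∈ C.erase c, d ∈ cells f := fun d hd => hC d (Multiset.mem_of_mem_erase hd)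
          rw [← hCe]
          refine rewrite_exchange x f (Q (m + 1)) (m + 1) c (C.erase c) (hC c hc) hD hcard ?_ ?_ hlow
          · have := mem_cells.1 (hC c hc)
            refine hth m _ _ (by omega) (by omega) (ihm _ hD (by omega))
          · rw [hCe]; exact IH
        -- exchange with nested companion
        have EXN : ∀ c ∈ C, ∀ p ∈ C.erase c, (∀ c' ∈ cells f, c'.1 + c'.2 = c.1 + c.2 →
            c'.1 < c.1 → c'.1 < p.1 ∧ p.2 < c'.2) → xm x C ∈ Q (m + 1) := by
          intro c hc p hp hn
          refine EX c hc ?_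
          intro c' hc' hr hlt
          have hCe := Multiset.cons_erase hc
          have hCp := Multiset.cons_erase hp
          have hcard : Multiset.card ((C.erase c).erase p) + 2 = m + 1 := by
            rw [← hm, ← hCe, ← hCp]; simp
          rw [← hCp, xm_cons]
          have hcm := mem_cells.1 (hC c hc)
          refine rewrite_nested x f hP (Q (m + 1)) (m + 1) (Ph f C) IH c' p _ hc'
            (hC p (Multiset.mem_of_mem_erase hp))
            (fun d hd => hC d (Multiset.mem_of_mem_erase (Multiset.mem_of_mem_erase hd)))
            hcard (hn c' hc' hr hlt).1 (hn c' hc' hr hlt).2 ?_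
          have e : Ph f C = ph f c + (ph f p + Ph f ((C.erase c).erase p)) := by
            rw [← Ph_cons, hCp, ← Ph_cons, hCe]
          rw [e]
          simp only [ph, hr]
          omega
        by_cases h1 : ∃ c ∈ C, ∃ p ∈ C, c.1 < p.1 ∧ p.2 < c.2
        · obtain ⟨c, hc, p, hp, h1, h2⟩ := h1
          have hCe := Multiset.cons_erase hc
          have hp' : p ∈ C.erase c := by
            rw [Multiset.mem_erase_of_ne]; exact hp
            rintro rfl; omega
          have hCp := Multiset.cons_erase hp'
          have hcard : Multiset.card ((C.erase c).erase p) + 2 = m + 1 := by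
            rw [← hm, ← hCe, ← hCp]; simp
          have e : Ph f C = ph f c + (ph f p + Ph f ((C.erase c).erase p)) := by
            rw [← Ph_cons, hCp, ← Ph_cons, hCe]
          have hcm := mem_cells.1 (hC c hc)
          have := rewrite_nested x f hP (Q (m + 1)) (m + 1) (Ph f C) IH c p _ (hC c hc)
            (hC p hp)
            (fun d hd => hC d (Multiset.mem_of_mem_erase (Multiset.mem_of_mem_erase hd)))
            hcard h1 h2 (by omega)
          rwa [← xm_cons, hCp, ← xm_cons, hCe] at this
        by_cases h2 : ∃ c ∈ C, c.1 = 0 ∨ c.2 + 1 = f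
        · obtain ⟨c, hc, h⟩ := h2
          refine EX c hc ?_
          intro c' hc' hr hlt
          have := mem_cells.1 hc'
          omega
        by_cases h3 : ∃ c ∈ C, ∃ p ∈ C.erase c, c.1 = p.1 ∧ p.2 ≤ c.2
        · obtain ⟨c, hc, p, hp, h3, h4⟩ := h3
          refine EXN c hc p hp ?_
          intro c' hc' hr hlt
          omega
        by_cases h4 : ∃ c ∈ C, ∃ p ∈ C.erase c, c.2 = p.2 ∧ c.1 ≤ p.1
        · obtain ⟨c, hc, p, hp, h3, h4⟩ := h4
          refine EXN c hc p hp ?_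
          intro c' hc' hr hlt
          omega
        push Not at h1 h2 h3 h4
        have hnd : C.Nodup := by
          rw [Multiset.nodup_iff_count_le_one]
          intro a
          by_contra hcon
          push Not at hcon
          have ha : a ∈ C := Multiset.count_pos.1 (by omega)
          have ha' : a ∈ C.erase a := by
            rw [← Multiset.count_pos, Multiset.count_erase_self]; omega
          exact absurd (h3 a ha a ha' rfl) (by omega)
        have hb : isB f ⟨C, hnd⟩ := by
          constructor
          · intro c hc
            have hc : c ∈ C := hc
            have := mem_cells.1 (hC c hc)
            have := h2 c hc
            omega
          · intro c hc d hd hne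
            have hc : c ∈ C := hc
            have hd : d ∈ C := hd
            have hd' : d ∈ C.erase c := (Multiset.mem_erase_of_ne (Ne.symm hne)).2 hd
            have hc' : c ∈ C.erase d := (Multiset.mem_erase_of_ne hne).2 hc
            have a1 := h1 c hc d hd
            have a2 := h1 d hd c hc
            have a3 := h3 c hc d hd'
            have a4 := h3 d hd c hc'
            have a5 := h4 c hc d hd'
            have a6 := h4 d hd c hc'
            omega
        rcases hB _ hb with h | ⟨c, hc, h⟩
        · have h' : xm x C ∈ Q (Multiset.card C) := h
          rwa [hm] at h'
        · refine EX c hc ?_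
          intro c' hc' hr hlt
          have := h c' hc' hr hlt
          have h' : x c' * xm x (C.erase c) ∈ Q (Multiset.card C) := this
          rwa [hm] at h'
    intro C hC hm
    exact key _ C hC hm (Nat.lt_succ_self _)

/-! ### Linear algebra -/

lemma linIndep_of_matrix {K V ι : Type*} [CommRing K] [IsDomain K] [AddCommGroup V] [Module K V]
    [Fintype ι] [DecidableEq ι] (w v : ι → V) (M : Matrix ι ι K)
    (hw : ∀ i, w i = ∑ j, M i j • v j) (h : LinearIndependent K w) : LinearIndependent K v := by
  have comb : ∀ d : ι → K, ∑ i, d i • w i = ∑ j, (Matrix.vecMul d M) j • v j := by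
    intro d
    simp only [hw, Finset.smul_sum, smul_smul, Matrix.vecMul, dotProduct, Finset.sum_smul]
    rw [Finset.sum_comm]
  rw [Fintype.linearIndependent_iff] at h ⊢
  have hdet : M.det ≠ 0 := by
    intro h0
    obtain ⟨d, hd, hd0⟩ := Matrix.exists_vecMul_eq_zero_iff.2 h0
    apply hd
    ext i
    exact h d (by rw [comb, hd0]; simp) i
  intro c hc i
  have e : Matrix.vecMul (Matrix.vecMul c M.adjugate) M = M.det • c := by
    rw [Matrix.vecMul_vecMul, Matrix.adjugate_mul, Matrix.vecMul_smul, Matrix.vecMul_one]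
  have h2 := h (Matrix.vecMul c M.adjugate) (by
    rw [comb, e]
    simp only [Pi.smul_apply, smul_eq_mul, mul_smul, ← Finset.smul_sum, hc, smul_zero])
  have h3 : Matrix.vecMul c M.adjugate = 0 := funext h2
  rw [h3, Matrix.zero_vecMul] at e
  have := congrFun e i
  simp only [Pi.zero_apply, Pi.smul_apply, smul_eq_mul] at this
  exact (mul_eq_zero.1 this.symm).resolve_left hdet

lemma linIndep_of_leadingCoeff {R D ι : Type*} [CommRing R] [CommRing D] [Algebra R D]
    (p : ι → Polynomial D) (h : LinearIndependent R (fun i => (p i).leadingCoeff)) :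
    LinearIndependent R p := by
  classical
  rw [linearIndependent_iff'] at h ⊢
  intro s g hg
  by_contra hcon
  push Not at hcon
  obtain ⟨i0, hi0, hgi0⟩ := hcon
  obtain ⟨j, hj, hmax⟩ := Finset.exists_max_image (s.filter (fun i => g i ≠ 0))
    (fun i => (p i).natDegree) ⟨i0, by simp [hi0, hgi0]⟩
  rw [Finset.mem_filter] at hj
  have h1 := h ((s.filter (fun i => g i ≠ 0)).filter (fun i => (p i).natDegree = (p j).natDegree)) g
    (by
      have h2 := congrArg (fun q => Polynomial.coeff q (p j).natDegree) hg
      simp only [Polynomial.finsetSum_coeff, Polynomial.coeff_smul, Polynomial.coeff_zero] at h2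
      rw [← h2, Finset.sum_filter, Finset.sum_filter]
      refine Finset.sum_congr rfl ?_
      intro i hi
      by_cases hgi : g i = 0
      · simp [hgi]
      · rw [if_pos hgi]
        split_ifs with hd
        · rw [Polynomial.leadingCoeff, hd]
        · have := hmax i (by simp [hi, hgi])
          rw [Polynomial.coeff_eq_zero_of_natDegree_lt (lt_of_le_of_ne this hd), smul_zero])
    j (by simp [hj])
  exact hj.2 h1

/-! ### Weak chains -/

/-- No two strictly nested cells. -/
def weakChain (C : Multiset (ℕ × ℕ)) : Prop :=
  ∀ c ∈ C, ∀ d ∈ C, ¬ (c.1 < d.1 ∧ d.2 < c.2)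

lemma weakChain.max_mem {C : Multiset (ℕ × ℕ)} (h : weakChain C) {a b : ℕ}
    (ha : a ∈ C.map Prod.fst) (hb : b ∈ C.map Prod.snd)
    (ha' : ∀ t ∈ C.map Prod.fst, t ≤ a) (hb' : ∀ t ∈ C.map Prod.snd, t ≤ b) : (a, b) ∈ C := by
  obtain ⟨c, hc, rfl⟩ := Multiset.mem_map.1 ha
  obtain ⟨d, hd, rfl⟩ := Multiset.mem_map.1 hb
  have h1 := ha' _ (Multiset.mem_map_of_mem Prod.fst hd)
  have h2 := hb' _ (Multiset.mem_map_of_mem Prod.snd hc)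
  have h3 := h d hd c hc
  by_cases e : c.2 = d.2
  · rw [← e]; exact hc
  · have : d.1 = c.1 := by omega
    rw [← this]; exact hd

lemma weakChain_ext : ∀ (n : ℕ) (C D : Multiset (ℕ × ℕ)), Multiset.card C = n → weakChain C →
    weakChain D → C.map Prod.fst = D.map Prod.fst → C.map Prod.snd = D.map Prod.snd → C = D := by
  intro n
  induction n with
  | zero =>
    intro C D h _ _ h1 _
    rw [Multiset.card_eq_zero] at h
    subst h
    simpa [eq_comm] using h1
  | succ n ih =>
    intro C D h hC hD h1 h2
    have ne1 : (C.map Prod.fst).toFinset.Nonempty := by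
      rw [Multiset.toFinset_nonempty]
      intro h0
      rw [Multiset.map_eq_zero] at h0
      simp [h0] at h
    have ne2 : (C.map Prod.snd).toFinset.Nonempty := by
      rw [Multiset.toFinset_nonempty]
      intro h0
      rw [Multiset.map_eq_zero] at h0
      simp [h0] at h
    set a := (C.map Prod.fst).toFinset.max' ne1 with ha
    set b := (C.map Prod.snd).toFinset.max' ne2 with hb
    have m1 : a ∈ C.map Prod.fst := by
      have := Finset.max'_mem _ ne1
      rwa [Multiset.mem_toFinset] at this
    have m2 : b ∈ C.map Prod.snd := by
      have := Finset.max'_mem _ ne2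
      rwa [Multiset.mem_toFinset] at this
    have l1 : ∀ t ∈ C.map Prod.fst, t ≤ a := fun t ht =>
      Finset.le_max' _ _ (Multiset.mem_toFinset.2 ht)
    have l2 : ∀ t ∈ C.map Prod.snd, t ≤ b := fun t ht =>
      Finset.le_max' _ _ (Multiset.mem_toFinset.2 ht)
    have hCm := hC.max_mem m1 m2 l1 l2
    have hDm := hD.max_mem (h1 ▸ m1) (h2 ▸ m2) (h1 ▸ l1) (h2 ▸ l2)
    have eC := Multiset.cons_erase hCm
    have eD := Multiset.cons_erase hDm
    rw [← eC, ← eD]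
    congr 1
    refine ih _ _ ?_ ?_ ?_ ?_ ?_
    · rw [← eC] at h; simpa using h
    · intro c hc d hd
      exact hC c (Multiset.mem_of_mem_erase hc) d (Multiset.mem_of_mem_erase hd)
    · intro c hc d hd
      exact hD c (Multiset.mem_of_mem_erase hc) d (Multiset.mem_of_mem_erase hd)
    · rw [← eC, ← eD] at h1
      simpa using h1
    · rw [← eC, ← eD] at h2
      simpa using h2

/-! ### Independence of weak chain monomials in the Plücker coordinates -/

/-- The Plücker coordinates of the generic `2 × ℕ` matrix. -/
def xY (R : Type*) [CommRing R] (c : ℕ × ℕ) : MvPolynomial (ℕ ⊕ ℕ) R :=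
  MvPolynomial.X (Sum.inl c.1) * MvPolynomial.X (Sum.inr c.2) -
    MvPolynomial.X (Sum.inl c.2) * MvPolynomial.X (Sum.inr c.1)

lemma Pfr_xY (R : Type*) [CommRing R] (f : ℕ) : Pfr f (xY R) := by
  intro i j k l _ _ _ _
  simp only [xY]; ring

/-- The degeneration map. -/
def degen (R : Type*) [CommRing R] :
    MvPolynomial (ℕ ⊕ ℕ) R →ₐ[R] Polynomial (MvPolynomial (ℕ ⊕ ℕ) R) :=
  MvPolynomial.aeval (Sum.elim (fun i => Polynomial.C (MvPolynomial.X (Sum.inl i)))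
    (fun j => Polynomial.C (MvPolynomial.X (Sum.inr j)) * Polynomial.X ^ j))

lemma degen_lead (R : Type*) [CommRing R] [IsDomain R] (c : ℕ × ℕ) (hc : c.1 < c.2) :
    (degen R (xY R c)).leadingCoeff =
      MvPolynomial.X (Sum.inl c.1) * MvPolynomial.X (Sum.inr c.2) := by
  have e : degen R (xY R c) =
    Polynomial.C (MvPolynomial.X (Sum.inl c.1) * MvPolynomial.X (Sum.inr c.2)) * Polynomial.X ^ c.2
    - Polynomial.C (MvPolynomial.X (Sum.inl c.2) * MvPolynomial.X (Sum.inr c.1)) *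
      Polynomial.X ^ c.1 := by
    simp only [degen, xY, map_sub, map_mul, MvPolynomial.aeval_X, Sum.elim_inl, Sum.elim_inr]
    ring
  rw [e]
  have hne : ∀ i j : ℕ, (MvPolynomial.X (Sum.inl i) * MvPolynomial.X (Sum.inr j) :
      MvPolynomial (ℕ ⊕ ℕ) R) ≠ 0 := fun i j =>
    mul_ne_zero (MvPolynomial.X_ne_zero _) (MvPolynomial.X_ne_zero _)
  rw [Polynomial.leadingCoeff_sub_of_degree_lt, Polynomial.leadingCoeff_C_mul_X_pow]
  rw [Polynomial.degree_C_mul_X_pow _ (hne _ _), Polynomial.degree_C_mul_X_pow _ (hne _ _)]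
  exact_mod_cast hc

lemma degen_lead_xm (R : Type*) [CommRing R] [IsDomain R] (C : Multiset (ℕ × ℕ))
    (hC : ∀ c ∈ C, c.1 < c.2) :
    (degen R (xm (xY R) C)).leadingCoeff = MvPolynomial.monomial
      (Multiset.toFinsupp ((C.map Prod.fst).map Sum.inl + (C.map Prod.snd).map Sum.inr)) 1 := by
  induction C using Multiset.induction with
  | empty => simp
  | cons c C ih =>
    rw [xm_cons, map_mul, Polynomial.leadingCoeff_mul, degen_lead R c (hC c (by simp)),
      ih (fun d hd => hC d (by simp [hd]))]
    have : (Multiset.map Sum.inl (Multiset.map Prod.fst (c ::ₘ C)) +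
        Multiset.map Sum.inr (Multiset.map Prod.snd (c ::ₘ C)) : Multiset (ℕ ⊕ ℕ)) =
        {Sum.inl c.1} + {Sum.inr c.2} + (Multiset.map Sum.inl (Multiset.map Prod.fst C) +
        Multiset.map Sum.inr (Multiset.map Prod.snd C)) := by
      simp only [Multiset.map_cons]
      simp only [← Multiset.singleton_add]
      abel
    rw [this]
    simp only [map_add, Multiset.toFinsupp_singleton]
    rw [MvPolynomial.X, MvPolynomial.X, MvPolynomial.monomial_mul, MvPolynomial.monomial_mul]
    simp

lemma chain_indep (R : Type*) [CommRing R] [IsDomain R] {ι : Type*}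
    (F : ι → Multiset (ℕ × ℕ)) (hF : Function.Injective F) (hw : ∀ i, weakChain (F i))
    (hlt : ∀ i, ∀ c ∈ F i, c.1 < c.2) : LinearIndependent R (fun i => xm (xY R) (F i)) := by
  refine LinearIndependent.of_comp (degen R).toLinearMap ?_
  refine linIndep_of_leadingCoeff _ ?_
  have h0 := (MvPolynomial.basisMonomials (ℕ ⊕ ℕ) R).linearIndependent
  have h1 := h0.comp (fun i : ι => Multiset.toFinsupp
    (((F i).map Prod.fst).map Sum.inl + ((F i).map Prod.snd).map Sum.inr)) (by
      intro i j hij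
      have h2 := Multiset.toFinsupp.injective hij
      apply hF
      have h3 := congrArg (Multiset.filterMap (Sum.elim some (fun _ : ℕ => (none : Option ℕ)))) h2
      have h4 := congrArg (Multiset.filterMap (Sum.elim (fun _ : ℕ => (none : Option ℕ)) some)) h2
      have k1 : ∀ s t : Multiset ℕ, Multiset.filterMap (Sum.elim some (fun _ : ℕ => (none : Option ℕ)))
          (s.map Sum.inl + t.map Sum.inr) = s := by
        intro s t
        induction s using Multiset.induction with
        | empty =>
          induction t using Multiset.induction with
          | empty => simp
          | cons a t ih =>
            rw [Multiset.map_cons, Multiset.add_cons, Multiset.filterMap_cons_none _ _ rfl]; exact ih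
        | cons a s ih => simpa using ih
      have k2 : ∀ s t : Multiset ℕ, Multiset.filterMap (Sum.elim (fun _ : ℕ => (none : Option ℕ)) some)
          (s.map Sum.inl + t.map Sum.inr) = t := by
        intro s t
        induction s using Multiset.induction with
        | empty =>
          induction t using Multiset.induction with
          | empty => simp
          | cons a t ih => simpa using ih
        | cons a s ih =>
          rw [Multiset.map_cons, Multiset.cons_add, Multiset.filterMap_cons_none _ _ rfl]; exact ih
      rw [k1, k1] at h3
      rw [k2, k2] at h4
      exact weakChain_ext _ _ _ rfl (hw i) (hw j) h3 h4)
  have e : (fun i => (((degen R).toLinearMap ∘ fun i => xm (xY R) (F i)) i).leadingCoeff) =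
      (MvPolynomial.basisMonomials (ℕ ⊕ ℕ) R) ∘ (fun i : ι => Multiset.toFinsupp
        (((F i).map Prod.fst).map Sum.inl + ((F i).map Prod.snd).map Sum.inr)) := by
    funext i
    have := degen_lead_xm R (F i) (hlt i)
    simpa using this
  rw [e]
  exact h1

/-! ### The path through a strict chain -/

/-- Index type of the basis. -/
abbrev Bf (f : ℕ) := {b : Finset (ℕ × ℕ) // isB f b}

instance (f : ℕ) : Finite (Bf f) := by
  refine Finite.of_injective (β := (cells f).powerset)
    (fun b => ⟨b.1, Finset.mem_powerset.2 b.2.sub⟩) ?_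
  intro a b h
  exact Subtype.ext (congrArg (fun t => t.1) h)

instance (f : ℕ) : Fintype (Bf f) := Fintype.ofFinite _

/-- First coordinate of the path of `b` in rank `r`. -/
def pathp (f : ℕ) (b : Finset (ℕ × ℕ)) (r : ℕ) : ℕ :=
  max (r + 1 - f) (b.sup (fun c => min c.1 (r - c.2)))

/-- The cell of the path of `b` in rank `r`. -/
def path (f : ℕ) (b : Finset (ℕ × ℕ)) (r : ℕ) : ℕ × ℕ := (pathp f b r, r - pathp f b r)

lemma pathp_le_iff (f : ℕ) (b : Finset (ℕ × ℕ)) (r t : ℕ) :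
    pathp f b r ≤ t ↔ r + 1 - f ≤ t ∧ ∀ c ∈ b, min c.1 (r - c.2) ≤ t := by
  rw [pathp, max_le_iff, Finset.sup_le_iff]

lemma le_pathp (f : ℕ) (b : Finset (ℕ × ℕ)) (r : ℕ) (c : ℕ × ℕ) (hc : c ∈ b) :
    min c.1 (r - c.2) ≤ pathp f b r := ((pathp_le_iff f b r _).1 le_rfl).2 c hc

lemma le_pathp0 (f : ℕ) (b : Finset (ℕ × ℕ)) (r : ℕ) :
    r + 1 - f ≤ pathp f b r := ((pathp_le_iff f b r _).1 le_rfl).1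

lemma pathp_cases (f : ℕ) (b : Finset (ℕ × ℕ)) (r : ℕ) :
    pathp f b r = r + 1 - f ∨ pathp f b r = 0 ∨ ∃ c ∈ b, pathp f b r = min c.1 (r - c.2) := by
  rcases max_choice (r + 1 - f) (b.sup (fun c => min c.1 (r - c.2))) with h | h
  · exact Or.inl h
  · right
    rcases b.eq_empty_or_nonempty with rfl | hne
    · left; rw [pathp, h]; simp
    · right
      obtain ⟨c, hc, e⟩ := Finset.exists_mem_eq_sup b hne (fun c => min c.1 (r - c.2))
      exact ⟨c, hc, by rw [pathp, h, e]⟩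

lemma path_valid (f : ℕ) (b : Finset (ℕ × ℕ)) (hb : isB f b) (r : ℕ) (h1 : 1 ≤ r)
    (h2 : r + 3 ≤ 2 * f) : path f b r ∈ cells f := by
  rw [mem_cells]
  have a1 := le_pathp0 f b r
  simp only [path]
  have : 2 * pathp f b r < r := by
    rcases pathp_cases f b r with h | h | ⟨c, hc, h⟩
    · omega
    · omega
    · have := hb.1 c hc
      omega
  omega

lemma path_rank (f : ℕ) (b : Finset (ℕ × ℕ)) (hb : isB f b) (r : ℕ) (h1 : 1 ≤ r)
    (h2 : r + 3 ≤ 2 * f) : (path f b r).1 + (path f b r).2 = r := by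
  have := mem_cells.1 (path_valid f b hb r h1 h2)
  simp only [path] at *
  omega

lemma pathp_mono (f : ℕ) (b : Finset (ℕ × ℕ)) {r s : ℕ} (h : r ≤ s) :
    pathp f b r ≤ pathp f b s := by
  rw [pathp_le_iff]
  refine ⟨?_, fun c hc => ?_⟩
  · have := le_pathp0 f b s; omega
  · have := le_pathp f b s c hc; omega

lemma pathp_lip (f : ℕ) (b : Finset (ℕ × ℕ)) {r s : ℕ} (h : r ≤ s) :
    pathp f b s ≤ pathp f b r + (s - r) := by
  rw [pathp_le_iff]
  refine ⟨?_, fun c hc => ?_⟩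
  · have := le_pathp0 f b r; omega
  · have := le_pathp f b r c hc; omega

lemma path_weak (f : ℕ) (b : Finset (ℕ × ℕ)) (r s : ℕ) :
    ¬ ((path f b r).1 < (path f b s).1 ∧ (path f b s).2 < (path f b r).2) := by
  simp only [path]
  rcases le_total r s with h | h
  · have a := pathp_mono f b h
    have c := pathp_lip f b h
    omega
  · have a := pathp_mono f b h
    have c := pathp_lip f b h
    omega

lemma path_mem (f : ℕ) (b : Finset (ℕ × ℕ)) (hb : isB f b) (c : ℕ × ℕ) (hc : c ∈ b) :
    path f b (c.1 + c.2) = c := by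
  have h0 := hb.1 c hc
  have h1 : c.1 ≤ pathp f b (c.1 + c.2) := by
    have := le_pathp f b (c.1 + c.2) c hc
    omega
  have h2 : pathp f b (c.1 + c.2) ≤ c.1 := by
    rw [pathp_le_iff]
    refine ⟨by omega, fun d hd => ?_⟩
    by_cases e : c = d
    · subst e; omega
    · have := hb.2 c hc d hd e
      omega
  ext <;> simp only [path] <;> omega

/-- The weak chain attached to `b` and an exponent vector. -/
def chainOf (f : ℕ) (b : Finset (ℕ × ℕ)) (α : Fin (2 * f - 3) →₀ ℕ) : Multiset (ℕ × ℕ) :=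
  b.val + (Finsupp.toMultiset α).map (fun k : Fin (2 * f - 3) => path f b (k + 1))

lemma mem_chainOf {f : ℕ} {b : Finset (ℕ × ℕ)} (hb : isB f b) {α : Fin (2 * f - 3) →₀ ℕ}
    {c : ℕ × ℕ} (hc : c ∈ chainOf f b α) : ∃ r, 1 ≤ r ∧ r + 3 ≤ 2 * f ∧ c = path f b r := by
  rw [chainOf, Multiset.mem_add] at hc
  rcases hc with hc | hc
  · have := hb.1 c hc
    exact ⟨c.1 + c.2, by omega, by omega, (path_mem f b hb c hc).symm⟩
  · obtain ⟨k, _, rfl⟩ := Multiset.mem_map.1 hc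
    exact ⟨k + 1, by omega, by omega, rfl⟩

lemma chainOf_valid {f : ℕ} {b : Finset (ℕ × ℕ)} (hb : isB f b) {α : Fin (2 * f - 3) →₀ ℕ}
    {c : ℕ × ℕ} (hc : c ∈ chainOf f b α) : c ∈ cells f := by
  obtain ⟨r, h1, h2, rfl⟩ := mem_chainOf hb hc
  exact path_valid f b hb r h1 h2

lemma chainOf_weak {f : ℕ} {b : Finset (ℕ × ℕ)} (hb : isB f b) (α : Fin (2 * f - 3) →₀ ℕ) :
    weakChain (chainOf f b α) := by
  intro c hc d hd
  obtain ⟨r, h1, h2, rfl⟩ := mem_chainOf hb hc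
  obtain ⟨s, h1, h2, rfl⟩ := mem_chainOf hb hd
  exact path_weak f b r s

lemma chainOf_step {f : ℕ} {b b' : Finset (ℕ × ℕ)} (hb : isB f b) (hb' : isB f b')
    {α α' : Fin (2 * f - 3) →₀ ℕ} (h : chainOf f b α = chainOf f b' α') (c : ℕ × ℕ) (hc : c ∈ b) :
    ∃ d ∈ b', (d.1 = c.1 ∧ d.2 ≤ c.2) ∨ (d.2 = c.2 ∧ c.1 ≤ d.1) := by
  have h0 : c ∈ chainOf f b α := by rw [chainOf, Multiset.mem_add]; exact Or.inl hc
  rw [h] at h0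
  obtain ⟨r, h1, h2, e⟩ := mem_chainOf hb' h0
  have hr := path_rank f b' hb' r h1 h2
  rw [← e] at hr
  have e1 : c.1 = pathp f b' r := by rw [e]; rfl
  have h3 := hb.1 c hc
  rcases pathp_cases f b' r with h | h | ⟨d, hd, h⟩
  · omega
  · omega
  · have := hb'.1 d hd
    exact ⟨d, hd, by omega⟩

lemma chainOf_sub {f : ℕ} {b b' : Finset (ℕ × ℕ)} (hb : isB f b) (hb' : isB f b')
    {α α' : Fin (2 * f - 3) →₀ ℕ} (h : chainOf f b α = chainOf f b' α') : b ⊆ b' := by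
  intro c hc
  by_contra hcon
  obtain ⟨d, hd, h1⟩ := chainOf_step hb hb' h c hc
  have hne : c ≠ d := by rintro rfl; exact hcon hd
  have hne' : c.1 ≠ d.1 ∨ c.2 ≠ d.2 := by
    by_contra hh; push Not at hh; exact hne (Prod.ext hh.1 hh.2)
  obtain ⟨e, he, h2⟩ := chainOf_step hb' hb h.symm d hd
  by_cases hce : c = e
  · subst hce
    omega
  · have := hb.2 c hc e he hce
    omega

lemma chainOf_inj (f : ℕ) : Function.Injective
    (fun p : (_ : Bf f) × (Fin (2 * f - 3) →₀ ℕ) => chainOf f p.1.1 p.2) := by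
  rintro ⟨⟨b, hb⟩, α⟩ ⟨⟨b', hb'⟩, α'⟩ h
  simp only at h
  have e : b = b' := Finset.Subset.antisymm (chainOf_sub hb hb' h) (chainOf_sub hb' hb h.symm)
  subst e
  have h2 : (Finsupp.toMultiset α).map (fun k : Fin (2 * f - 3) => path f b (k + 1)) =
    (Finsupp.toMultiset α').map (fun k : Fin (2 * f - 3) => path f b (k + 1)) := add_left_cancel h
  have h3 := congrArg (Multiset.map (fun c : ℕ × ℕ => c.1 + c.2)) h2
  rw [Multiset.map_map, Multiset.map_map] at h3
  have e1 : ((fun c : ℕ × ℕ => c.1 + c.2) ∘ fun k : Fin (2 * f - 3) => path f b (k + 1)) =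
      fun k : Fin (2 * f - 3) => (k : ℕ) + 1 := by
    funext k
    exact path_rank f b hb _ (by omega) (by omega)
  rw [e1] at h3
  have h4 := Multiset.map_injective (f := fun k : Fin (2 * f - 3) => (k : ℕ) + 1)
    (fun a b h => Fin.ext (Nat.succ_injective h)) h3
  have h5 : α = α' := Multiset.toFinsupp.symm.injective h4
  rw [h5]

lemma card_chainOf (f : ℕ) (b : Finset (ℕ × ℕ)) (α : Fin (2 * f - 3) →₀ ℕ) :
    Multiset.card (chainOf f b α) = b.card + α.degree := by
  simp [chainOf, Finsupp.card_toMultiset, Finsupp.degree_apply, Finsupp.sum]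

/-! ### The action of the parameter ring -/

/-- The parameter ring. -/
abbrev SP (R : Type*) [CommRing R] (f : ℕ) := MvPolynomial (Fin (2 * f - 3)) R

/-- The structure map of the parameter ring. -/
def Th {R A : Type*} [CommRing R] [CommRing A] [Algebra R A] (x : ℕ × ℕ → A) (f : ℕ) :
    SP R f →ₐ[R] A := MvPolynomial.aeval (fun k => th x f (k + 1))

/-- The elements which form an `R`-basis. -/
def vv (R : Type*) {A : Type*} [CommRing R] [CommRing A] [Algebra R A] (x : ℕ × ℕ → A) (f : ℕ)
    (p : (_ : Bf f) × (Fin (2 * f - 3) →₀ ℕ)) : A :=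
  Th x f (MvPolynomial.monomial p.2 (1 : R)) * xm x p.1.1.val

lemma th_mul_vv (R : Type*) {A : Type*} [CommRing R] [CommRing A] [Algebra R A] (x : ℕ × ℕ → A)
    (f : ℕ) (p : (_ : Bf f) × (Fin (2 * f - 3) →₀ ℕ)) (k : Fin (2 * f - 3)) :
    th x f (k + 1) * vv R x f p = vv R x f ⟨p.1, p.2 + Finsupp.single k 1⟩ := by
  have : (MvPolynomial.monomial (p.2 + Finsupp.single k 1) (1 : R)) =
      MvPolynomial.X k * MvPolynomial.monomial p.2 1 := by
    rw [MvPolynomial.X, MvPolynomial.monomial_mul, add_comm, one_mul]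
  simp only [vv, this, map_mul]
  rw [Th, MvPolynomial.aeval_X]; ring

theorem mono_mem_span (R : Type*) {A : Type*} [CommRing R] [CommRing A] [Algebra R A]
    (x : ℕ × ℕ → A) (f : ℕ) (hP : Pfr f x) (m : ℕ) (C : Multiset (ℕ × ℕ))
    (hC : ∀ c ∈ C, c ∈ cells f) (hm : Multiset.card C = m) :
    xm x C ∈ Submodule.span R (vv R x f '' {p | p.1.1.card + p.2.degree = m}) := by
  refine rewriteAll x f hP (fun m => (Submodule.span R
    (vv R x f '' {p | p.1.1.card + p.2.degree = m})).toAddSubgroup) ?_ ?_ m C hC hm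
  · intro m r a h1 h2 ha
    have ha' : a ∈ Submodule.span R (vv R x f '' {p | p.1.1.card + p.2.degree = m}) := ha
    show th x f r * a ∈ Submodule.span R (vv R x f '' {p | p.1.1.card + p.2.degree = m + 1})
    obtain ⟨k, rfl⟩ : ∃ k : Fin (2 * f - 3), (k : ℕ) + 1 = r := ⟨⟨r - 1, by omega⟩, by simp; omega⟩
    induction ha' using Submodule.span_induction with
    | mem y hy =>
      obtain ⟨p, hp, rfl⟩ := hy
      rw [th_mul_vv]
      refine Submodule.subset_span ⟨_, ?_, rfl⟩
      simp only [Set.mem_ofPred_eq] at hp ⊢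
      rw [map_add, ← hp, Finsupp.degree_single]; ring
    | zero => simp
    | add y z _ _ hy hz => rw [mul_add]; exact Submodule.add_mem _ (hy ‹_›) (hz ‹_›)
    | smul c y _ hy => rw [mul_smul_comm]; exact Submodule.smul_mem _ _ (hy ‹_›)
  · intro b hb
    left
    refine Submodule.subset_span ⟨⟨⟨b, hb⟩, 0⟩, ?_, ?_⟩
    · simp
    · simp [vv]

theorem vv_indep (R : Type*) [CommRing R] [IsDomain R] (f : ℕ) :
    LinearIndependent R (vv R (xY R) f) := by
  classical
  rw [linearIndependent_iff_finset_linearIndependent]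
  intro s
  set N := s.sup (fun p => p.1.1.card + p.2.degree) with hN
  let I := {p : (_ : Bf f) × (Fin (2 * f - 3) →₀ ℕ) // p.1.1.card + p.2.degree ≤ N}
  haveI : Finite I := by
    have hfin : Set.Finite {α : Fin (2 * f - 3) →₀ ℕ | α.degree ≤ N} :=
      Finsupp.finite_of_degree_le N
    haveI := hfin.to_subtype
    refine Finite.of_injective (β := Bf f × {α : Fin (2 * f - 3) →₀ ℕ | α.degree ≤ N})
      (fun p => (p.1.1, ⟨p.1.2, le_trans (Nat.le_add_left _ _) p.2⟩)) ?_
    rintro ⟨⟨b, α⟩, h⟩ ⟨⟨b', α'⟩, h'⟩ e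
    simp only [Prod.mk.injEq, Subtype.mk.injEq] at e
    obtain ⟨rfl, rfl⟩ := e
    rfl
  haveI := Fintype.ofFinite I
  have key : LinearIndependent R (fun i : I => vv R (xY R) f i.1) := by
    have hw : LinearIndependent R (fun i : I => xm (xY R) (chainOf f i.1.1.1 i.1.2)) :=
      chain_indep R _ ((chainOf_inj f).comp Subtype.val_injective)
        (fun i => chainOf_weak i.1.1.2 _)
        (fun i c hc => (mem_cells.1 (chainOf_valid i.1.1.2 hc)).1)
    have hM : ∀ i : I, ∃ M : I → R, xm (xY R) (chainOf f i.1.1.1 i.1.2) =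
        ∑ j, M j • vv R (xY R) f j.1 := by
      intro i
      have := mono_mem_span R (xY R) f (Pfr_xY R f) _ (chainOf f i.1.1.1 i.1.2)
        (fun c hc => chainOf_valid i.1.1.2 hc) (card_chainOf _ _ _)
      have h2 : vv R (xY R) f '' {p | p.1.1.card + p.2.degree = i.1.1.1.card + i.1.2.degree} ⊆
          Set.range (fun i : I => vv R (xY R) f i.1) := by
        rintro _ ⟨p, hp, rfl⟩
        exact ⟨⟨p, hp.le.trans i.2⟩, rfl⟩
      have := Submodule.span_mono h2 this
      rw [Submodule.mem_span_range_iff_exists_fun] at this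
      obtain ⟨M, hM⟩ := this
      exact ⟨M, hM.symm⟩
    choose M hM using hM
    exact linIndep_of_matrix _ _ M hM hw
  exact key.comp (fun p : s => (⟨p.1, Finset.le_sup (f := fun p : (_ : Bf f) ×
    (Fin (2 * f - 3) →₀ ℕ) => p.1.1.card + p.2.degree) p.2⟩ : I))
    (fun a b h => Subtype.ext (congrArg (fun t => t.1) h))

/-! ### Models of the coordinate ring -/

/-- The linear combination map of the basis elements. -/
def TT {R A : Type*} [CommRing R] [CommRing A] [Algebra R A] (x : ℕ × ℕ → A) (f : ℕ)
    (s : Bf f → SP R f) : A := ∑ b, Th x f (s b) * xm x b.1.val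

/-- `A` is a copy of the coordinate ring of the cone over the Grassmannian. -/
structure IsModel (R : Type*) {A : Type*} [CommRing R] [CommRing A] [Algebra R A] (f : ℕ)
    (x : ℕ × ℕ → A) : Prop where
  pfr : Pfr f x
  gen : Algebra.adjoin R (x '' (cells f : Set (ℕ × ℕ))) = ⊤
  ex_map : ∃ ψ : A →ₐ[R] MvPolynomial (ℕ ⊕ ℕ) R, ∀ c ∈ cells f, ψ (x c) = xY R c

lemma map_xm {A B : Type*} [CommRing A] [CommRing B] (g : A →+* B) (x : ℕ × ℕ → A)
    (y : ℕ × ℕ → B) (f : ℕ) (h : ∀ c ∈ cells f, g (x c) = y c) (C : Multiset (ℕ × ℕ))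
    (hC : ∀ c ∈ C, c ∈ cells f) : g (xm x C) = xm y C := by
  rw [xm, xm, map_multiset_prod, Multiset.map_map]
  congr 1
  exact Multiset.map_congr rfl (fun c hc => h c (hC c hc))

lemma map_th {A B : Type*} [CommRing A] [CommRing B] (g : A →+* B) (x : ℕ × ℕ → A)
    (y : ℕ × ℕ → B) (f : ℕ) (h : ∀ c ∈ cells f, g (x c) = y c) (r : ℕ) :
    g (th x f r) = th y f r := by
  rw [th, th, map_sum]
  exact Finset.sum_congr rfl (fun c hc => h c (Finset.mem_filter.1 hc).1)

lemma map_Th {R R' A B : Type*} [CommRing R] [CommRing R'] [CommRing A] [CommRing B]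
    [Algebra R A] [Algebra R' B] (π : R →+* R') (g : A →+* B)
    (hg : ∀ r, g (algebraMap R A r) = algebraMap R' B (π r)) (x : ℕ × ℕ → A)
    (y : ℕ × ℕ → B) (f : ℕ) (h : ∀ c ∈ cells f, g (x c) = y c) (s : SP R f) :
    g (Th x f s) = Th y f (MvPolynomial.map π s) := by
  induction s using MvPolynomial.induction_on with
  | C r => simp [Th, hg]
  | add p q hp hq => simp only [map_add, hp, hq]
  | mul_X p k hp =>
    simp only [map_mul, hp, MvPolynomial.map_X]
    congr 1
    simp only [Th, MvPolynomial.aeval_X]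
    exact map_th g x y f h _

lemma map_TT {R R' A B : Type*} [CommRing R] [CommRing R'] [CommRing A] [CommRing B]
    [Algebra R A] [Algebra R' B] (π : R →+* R') (g : A →+* B)
    (hg : ∀ r, g (algebraMap R A r) = algebraMap R' B (π r)) (x : ℕ × ℕ → A)
    (y : ℕ × ℕ → B) (f : ℕ) (h : ∀ c ∈ cells f, g (x c) = y c) (s : Bf f → SP R f) :
    g (TT x f s) = TT y f (fun b => MvPolynomial.map π (s b)) := by
  rw [TT, TT, map_sum]
  refine Finset.sum_congr rfl (fun b _ => ?_)
  rw [map_mul, map_Th π g hg x y f h, map_xm g x y f h _ (fun c hc => b.2.sub hc)]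

lemma TT_sub {R A : Type*} [CommRing R] [CommRing A] [Algebra R A] (x : ℕ × ℕ → A) (f : ℕ)
    (s t : Bf f → SP R f) : TT x f (s - t) = TT x f s - TT x f t := by
  simp [TT, sub_mul, Finset.sum_sub_distrib]

lemma TT_add {R A : Type*} [CommRing R] [CommRing A] [Algebra R A] (x : ℕ × ℕ → A) (f : ℕ)
    (s t : Bf f → SP R f) : TT x f (s + t) = TT x f s + TT x f t := by
  simp [TT, add_mul, Finset.sum_add_distrib]

lemma TT_smul {R A : Type*} [CommRing R] [CommRing A] [Algebra R A] (x : ℕ × ℕ → A) (f : ℕ)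
    (r : SP R f) (t : Bf f → SP R f) : TT x f (r • t) = Th x f r * TT x f t := by
  simp [TT, Finset.mul_sum, mul_assoc]

theorem TTY_inj (R : Type*) [CommRing R] [IsDomain R] (f : ℕ) (s : Bf f → SP R f)
    (h : TT (xY R) f s = 0) : s = 0 := by
  classical
  have hi := vv_indep R f
  rw [linearIndependent_iff'] at hi
  have e : ∑ p ∈ Finset.univ.sigma (fun b => (s b).support), (s p.1).coeff p.2 • vv R (xY R) f p
      = 0 := by
    rw [← h, Finset.sum_sigma, TT]
    refine Finset.sum_congr rfl (fun b _ => ?_)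
    simp only [vv]
    conv_rhs => rw [(s b).as_sum]
    rw [map_sum, Finset.sum_mul]
    refine Finset.sum_congr rfl (fun α _ => ?_)
    rw [← smul_mul_assoc, ← map_smul, MvPolynomial.smul_monomial, smul_eq_mul, mul_one]
  funext b
  ext α
  simp only [Pi.zero_apply, MvPolynomial.coeff_zero]
  by_contra hne
  exact hne (hi _ _ e ⟨b, α⟩ (by simp [hne]))

lemma IsModel.span_xm {R A : Type*} [CommRing R] [CommRing A] [Algebra R A] {f : ℕ}
    {x : ℕ × ℕ → A} (h : IsModel R f x) :
    Submodule.span R {a | ∃ C : Multiset (ℕ × ℕ), (∀ c ∈ C, c ∈ cells f) ∧ a = xm x C} = ⊤ := by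
  rw [eq_top_iff]
  intro a _
  have ha : a ∈ Subalgebra.toSubmodule (Algebra.adjoin R (x '' (cells f : Set (ℕ × ℕ)))) := by
    rw [h.gen]; trivial
  rw [Algebra.adjoin_eq_span] at ha
  refine Submodule.span_mono ?_ ha
  intro y hy
  have hy' : y ∈ Submonoid.closure (x '' (cells f : Set (ℕ × ℕ))) := hy
  clear hy
  induction hy' using Submonoid.closure_induction with
  | mem y hy =>
    obtain ⟨c, hc, rfl⟩ := hy
    exact ⟨{c}, by simpa using hc, by simp [xm]⟩
  | one => exact ⟨0, by simp, by simp⟩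
  | mul y z _ _ h1 h2 =>
    obtain ⟨C, hC, rfl⟩ := h1
    obtain ⟨D, hD, rfl⟩ := h2
    refine ⟨C + D, ?_, by rw [xm_add]⟩
    intro c hc
    rcases Multiset.mem_add.1 hc with hc | hc
    · exact hC c hc
    · exact hD c hc

lemma vv_eq_TT {R A : Type*} [CommRing R] [CommRing A] [Algebra R A] (f : ℕ)
    (x : ℕ × ℕ → A) (p : (_ : Bf f) × (Fin (2 * f - 3) →₀ ℕ)) :
    vv R x f p = TT x f (Pi.single p.1 (MvPolynomial.monomial p.2 (1 : R))) := by
  rw [TT, Finset.sum_eq_single p.1]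
  · simp [vv]
  · intro b _ hb
    rw [Pi.single_eq_of_ne hb]; simp
  · simp

theorem IsModel.TT_surj {R A : Type*} [CommRing R] [CommRing A] [Algebra R A] {f : ℕ}
    {x : ℕ × ℕ → A} (h : IsModel R f x) (a : A) : ∃ s : Bf f → SP R f, TT x f s = a := by
  have ha : a ∈ Submodule.span R
    {a | ∃ C : Multiset (ℕ × ℕ), (∀ c ∈ C, c ∈ cells f) ∧ a = xm x C} := by
    rw [h.span_xm]; trivial
  have hs : ∀ (r : R) (s : Bf f → SP R f), TT x f (r • s) = r • TT x f s := by
    intro r s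
    simp [TT, Finset.smul_sum]
  induction ha using Submodule.span_induction with
  | zero => exact ⟨0, by simp [TT]⟩
  | add y z _ _ h1 h2 =>
    obtain ⟨s, rfl⟩ := h1
    obtain ⟨t, rfl⟩ := h2
    exact ⟨s + t, TT_add x f s t⟩
  | smul r y _ h1 =>
    obtain ⟨s, rfl⟩ := h1
    exact ⟨r • s, hs r s⟩
  | mem y hy =>
    obtain ⟨C, hC, rfl⟩ := hy
    have := mono_mem_span R x f h.pfr _ C hC rfl
    generalize xm x C = y at this
    induction this using Submodule.span_induction with
    | zero => exact ⟨0, by simp [TT]⟩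
    | add y z _ _ h1 h2 =>
      obtain ⟨s, rfl⟩ := h1
      obtain ⟨t, rfl⟩ := h2
      exact ⟨s + t, TT_add x f s t⟩
    | smul r y _ h1 =>
      obtain ⟨s, rfl⟩ := h1
      exact ⟨r • s, hs r s⟩
    | mem y hy =>
      obtain ⟨p, _, rfl⟩ := hy
      exact ⟨_, (vv_eq_TT f x p).symm⟩

lemma psi_TT {R A : Type*} [CommRing R] [CommRing A] [Algebra R A] {f : ℕ}
    {x : ℕ × ℕ → A} (ψ : A →ₐ[R] MvPolynomial (ℕ ⊕ ℕ) R) (hψ : ∀ c ∈ cells f, ψ (x c) = xY R c)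
    (s : Bf f → SP R f) : ψ (TT x f s) = TT (xY R) f s := by
  have := map_TT (RingHom.id R) (ψ : A →+* MvPolynomial (ℕ ⊕ ℕ) R) (by simp) x (xY R) f hψ s
  simpa [MvPolynomial.map_id] using this

theorem IsModel.TT_inj {R A : Type*} [CommRing R] [IsDomain R] [CommRing A] [Algebra R A] {f : ℕ}
    {x : ℕ × ℕ → A} (h : IsModel R f x) (s : Bf f → SP R f) (hs : TT x f s = 0) : s = 0 := by
  obtain ⟨ψ, hψ⟩ := h.ex_map
  apply TTY_inj R f
  rw [← psi_TT ψ hψ, hs, map_zero]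

theorem IsModel.psi_inj {R A : Type*} [CommRing R] [IsDomain R] [CommRing A] [Algebra R A] {f : ℕ}
    {x : ℕ × ℕ → A} (h : IsModel R f x) (ψ : A →ₐ[R] MvPolynomial (ℕ ⊕ ℕ) R)
    (hψ : ∀ c ∈ cells f, ψ (x c) = xY R c) : Function.Injective ψ := by
  rw [injective_iff_map_eq_zero]
  intro a ha
  obtain ⟨s, rfl⟩ := h.TT_surj a
  rw [psi_TT ψ hψ] at ha
  rw [TTY_inj R f s ha]
  simp [TT]

theorem IsModel.isDomain {R A : Type*} [CommRing R] [IsDomain R] [CommRing A] [Algebra R A] {f : ℕ}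
    {x : ℕ × ℕ → A} (h : IsModel R f x) : IsDomain A := by
  obtain ⟨ψ, hψ⟩ := h.ex_map
  exact (h.psi_inj ψ hψ).isDomain (ψ : A →+* MvPolynomial (ℕ ⊕ ℕ) R)

theorem IsModel.exists_basis {R A : Type*} [CommRing R] [IsDomain R] [CommRing A] [Algebra R A]
    {f : ℕ} {x : ℕ × ℕ → A} (h : IsModel R f x) [Algebra (SP R f) A]
    (hT : ∀ s, algebraMap (SP R f) A s = Th x f s) :
    ∃ B : Module.Basis (Bf f) (SP R f) A, ∀ b, B b = xm x b.1.val := by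
  have e : ∀ s : Bf f → SP R f, ∑ b, s b • xm x b.1.val = TT x f s := by
    intro s
    simp only [Algebra.smul_def, hT, TT]
  refine ⟨Module.Basis.mk (v := fun b : Bf f => xm x b.1.val) ?_ ?_, ?_⟩
  · rw [Fintype.linearIndependent_iff]
    intro s hs
    rw [e] at hs
    intro b
    rw [h.TT_inj s hs]; rfl
  · intro a _
    obtain ⟨s, rfl⟩ := h.TT_surj a
    rw [Submodule.mem_span_range_iff_exists_fun]
    exact ⟨s, e s⟩
  · intro b
    simp

lemma basis_repr_TT {R A : Type*} [CommRing R] [CommRing A] [Algebra R A]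
    {f : ℕ} {x : ℕ × ℕ → A} [Algebra (SP R f) A]
    (hT : ∀ s, algebraMap (SP R f) A s = Th x f s) (B : Module.Basis (Bf f) (SP R f) A)
    (hB : ∀ b, B b = xm x b.1.val) (s : Bf f → SP R f) : ⇑(B.repr (TT x f s)) = s := by
  have : TT x f s = ∑ b, s b • B b := by
    simp only [Algebra.smul_def, hT, TT, hB]
  rw [this]
  exact B.repr_sum_self s

lemma TT_basis_repr {R A : Type*} [CommRing R] [CommRing A] [Algebra R A]
    {f : ℕ} {x : ℕ × ℕ → A} [Algebra (SP R f) A]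
    (hT : ∀ s, algebraMap (SP R f) A s = Th x f s) (B : Module.Basis (Bf f) (SP R f) A)
    (hB : ∀ b, B b = xm x b.1.val) (a : A) : TT x f (B.repr a) = a := by
  conv_rhs => rw [← B.sum_repr a]
  simp only [Algebra.smul_def, hT, TT, hB]

/-- Homogeneity of the coordinates of a monomial. -/
lemma repr_homog {R A : Type*} [CommRing R] [CommRing A] [Algebra R A]
    {f : ℕ} {x : ℕ × ℕ → A} (hP : Pfr f x) [Algebra (SP R f) A]
    (hT : ∀ s, algebraMap (SP R f) A s = Th x f s) (B : Module.Basis (Bf f) (SP R f) A)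
    (hB : ∀ b, B b = xm x b.1.val) (C : Multiset (ℕ × ℕ)) (hC : ∀ c ∈ C, c ∈ cells f) (b : Bf f) :
    B.repr (xm x C) b = 0 ∨ ∃ d, d + b.1.card = Multiset.card C ∧
      (B.repr (xm x C) b).IsHomogeneous d := by
  have key : ∀ a ∈ Submodule.span R (vv R x f '' {p | p.1.1.card + p.2.degree = Multiset.card C}),
      ∃ s : Bf f → SP R f, TT x f s = a ∧ ∀ b : Bf f,
      (Multiset.card C < b.1.card → s b = 0) ∧ (s b).IsHomogeneous (Multiset.card C - b.1.card) := by
    intro a ha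
    induction ha using Submodule.span_induction with
    | zero => exact ⟨0, by simp [TT], fun b => ⟨fun _ => rfl, MvPolynomial.isHomogeneous_zero _ _ _⟩⟩
    | add y z _ _ h1 h2 =>
      obtain ⟨s, rfl, hs⟩ := h1
      obtain ⟨t, rfl, ht⟩ := h2
      refine ⟨s + t, TT_add x f s t, fun b => ⟨fun h => ?_, (hs b).2.add (ht b).2⟩⟩
      rw [Pi.add_apply, (hs b).1 h, (ht b).1 h, add_zero]
    | smul r y _ h1 =>
      obtain ⟨s, rfl, hs⟩ := h1
      refine ⟨r • s, by simp [TT, Finset.smul_sum], fun b => ⟨fun h => ?_, ?_⟩⟩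
      · rw [Pi.smul_apply, (hs b).1 h, smul_zero]
      · exact (MvPolynomial.homogeneousSubmodule _ _ _).smul_mem r (hs b).2
    | mem y hy =>
      obtain ⟨p, hp, rfl⟩ := hy
      have hp' : p.1.1.card + p.2.degree = Multiset.card C := hp
      refine ⟨_, (vv_eq_TT f x p).symm, fun b => ?_⟩
      by_cases e : b = p.1
      · subst e
        rw [Pi.single_eq_same]
        refine ⟨fun h => by omega, MvPolynomial.isHomogeneous_monomial _ (by omega)⟩
      · rw [Pi.single_eq_of_ne e]
        exact ⟨fun _ => rfl, MvPolynomial.isHomogeneous_zero _ _ _⟩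
  obtain ⟨s, hs, h⟩ := key _ (mono_mem_span R x f hP _ C hC rfl)
  rw [← hs, basis_repr_TT hT B hB]
  by_cases hlt : Multiset.card C < b.1.card
  · exact Or.inl ((h b).1 hlt)
  · exact Or.inr ⟨_, by omega, (h b).2⟩

/-! ### The complementation involution -/

/-- First coordinates. -/
def bI (b : Finset (ℕ × ℕ)) : Finset ℕ := b.image Prod.fst

/-- Second coordinates, shifted. -/
def bJ (b : Finset (ℕ × ℕ)) : Finset ℕ := b.image (fun c => c.2 - 1)

lemma isB.injI {f : ℕ} {b : Finset (ℕ × ℕ)} (h : isB f b) : Set.InjOn Prod.fst (b : Set (ℕ × ℕ)) := by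
  intro c hc d hd e
  by_contra hne
  have := h.2 c hc d hd hne
  omega

lemma isB.injS {f : ℕ} {b : Finset (ℕ × ℕ)} (h : isB f b) : Set.InjOn Prod.snd (b : Set (ℕ × ℕ)) := by
  intro c hc d hd e
  by_contra hne
  have := h.2 c hc d hd hne
  omega

lemma isB.injJ {f : ℕ} {b : Finset (ℕ × ℕ)} (h : isB f b) :
    Set.InjOn (fun c : ℕ × ℕ => c.2 - 1) (b : Set (ℕ × ℕ)) := by
  intro c hc d hd e
  have h1 := h.1 c hc
  have h2 := h.1 d hd
  simp only at e
  exact h.injS hc hd (by omega)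

lemma isB.bI_sub {f : ℕ} {b : Finset (ℕ × ℕ)} (h : isB f b) : bI b ⊆ Finset.Icc 1 (f - 3) := by
  intro i hi
  obtain ⟨c, hc, rfl⟩ := Finset.mem_image.1 hi
  have := h.1 c hc
  rw [Finset.mem_Icc]; omega

lemma isB.bJ_sub {f : ℕ} {b : Finset (ℕ × ℕ)} (h : isB f b) : bJ b ⊆ Finset.Icc 1 (f - 3) := by
  intro i hi
  obtain ⟨c, hc, rfl⟩ := Finset.mem_image.1 hi
  have := h.1 c hc
  rw [Finset.mem_Icc]; omega

lemma isB.card_bI {f : ℕ} {b : Finset (ℕ × ℕ)} (h : isB f b) : (bI b).card = b.card :=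
  Finset.card_image_of_injOn h.injI

lemma isB.card_bJ {f : ℕ} {b : Finset (ℕ × ℕ)} (h : isB f b) : (bJ b).card = b.card :=
  Finset.card_image_of_injOn h.injJ

lemma isB.gale {f : ℕ} {b : Finset (ℕ × ℕ)} (h : isB f b) (t : ℕ) :
    ((bJ b).filter (· ≤ t)).card ≤ ((bI b).filter (· ≤ t)).card := by
  rw [bI, bJ, Finset.filter_image, Finset.filter_image,
    Finset.card_image_of_injOn (h.injJ.mono (by intro c hc; exact (Finset.mem_filter.1 hc).1)), Finset.card_image_of_injOn (h.injI.mono (by intro c hc; exact (Finset.mem_filter.1 hc).1))]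
  apply Finset.card_le_card
  intro c hc
  rw [Finset.mem_filter] at hc ⊢
  have := h.1 c hc.1
  exact ⟨hc.1, by omega⟩

lemma isB.ext {f : ℕ} {b b' : Finset (ℕ × ℕ)} (h : isB f b) (h' : isB f b') (h1 : bI b = bI b')
    (h2 : bJ b = bJ b') : b = b' := by
  have wk : ∀ b : Finset (ℕ × ℕ), isB f b → weakChain b.val := by
    intro b h c hc d hd
    by_cases e : c = d
    · subst e; omega
    · have := h.2 c hc d hd e; omega
  have e1 : b.val.map Prod.fst = b'.val.map Prod.fst := by
    rw [← Finset.image_val_of_injOn h.injI, ← Finset.image_val_of_injOn h'.injI]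
    exact congrArg Finset.val h1
  have e2 : b.val.map Prod.snd = b'.val.map Prod.snd := by
    have k1 : b.val.map (fun c => c.2 - 1) = b'.val.map (fun c => c.2 - 1) := by
      rw [← Finset.image_val_of_injOn h.injJ, ← Finset.image_val_of_injOn h'.injJ]
      exact congrArg Finset.val h2
    have k2 := congrArg (Multiset.map (fun t => t + 1)) k1
    rw [Multiset.map_map, Multiset.map_map] at k2
    have k3 : ∀ b : Finset (ℕ × ℕ), isB f b →
        Multiset.map ((fun t => t + 1) ∘ fun c : ℕ × ℕ => c.2 - 1) b.val = b.val.map Prod.snd := by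
      intro b h
      refine Multiset.map_congr rfl (fun c hc => ?_)
      have := h.1 c hc
      simp only [Function.comp]; omega
    rwa [k3 b h, k3 b' h'] at k2
  exact Finset.val_injective (weakChain_ext _ _ _ rfl (wk b h) (wk b' h') e1 e2)

lemma exists_build {f : ℕ} (hf : 3 ≤ f) (I J : Finset ℕ) (hI : I ⊆ Finset.Icc 1 (f - 3))
    (hJ : J ⊆ Finset.Icc 1 (f - 3)) (k : ℕ) (cI : I.card = k) (cJ : J.card = k)
    (hg : ∀ t, (J.filter (· ≤ t)).card ≤ (I.filter (· ≤ t)).card) :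
    ∃ b : Bf f, bI b.1 = I ∧ bJ b.1 = J := by
  classical
  set p := I.orderEmbOfFin cI with hp
  set q := J.orderEmbOfFin cJ with hq
  have hle : ∀ m, p m ≤ q m := by
    intro m
    by_contra hlt
    push Not at hlt
    have h1 : (Finset.univ.filter (fun a : Fin k => a ≤ m)).card ≤ (J.filter (· ≤ q m)).card := by
      rw [← Finset.card_image_of_injective _ q.injective]
      apply Finset.card_le_card
      intro t ht
      simp only [Finset.mem_image, Finset.mem_filter, Finset.mem_univ, true_and] at ht
      obtain ⟨a, ha, rfl⟩ := ht
      rw [Finset.mem_filter]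
      exact ⟨Finset.orderEmbOfFin_mem J cJ a, q.monotone ha⟩
    have h2 : (I.filter (· ≤ q m)).card ≤ (Finset.univ.filter (fun a : Fin k => a < m)).card := by
      rw [← Finset.card_image_of_injective _ p.injective]
      apply Finset.card_le_card
      intro t ht
      rw [Finset.mem_filter] at ht
      have : t ∈ Set.range p := by rw [hp, Finset.range_orderEmbOfFin]; exact ht.1
      obtain ⟨a, rfl⟩ := this
      simp only [Finset.mem_image, Finset.mem_filter, Finset.mem_univ, true_and]
      exact ⟨a, p.lt_iff_lt.1 (lt_of_le_of_lt ht.2 hlt), rfl⟩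
    have h3 : (Finset.univ.filter (fun a : Fin k => a < m)).card <
        (Finset.univ.filter (fun a : Fin k => a ≤ m)).card := by
      apply Finset.card_lt_card
      rw [Finset.ssubset_iff_of_subset]
      · exact ⟨m, by simp, by simp⟩
      · intro a ha
        simp only [Finset.mem_filter, Finset.mem_univ, true_and] at ha ⊢
        exact ha.le
    have := hg (q m)
    omega
  have mp : ∀ m, p m ∈ Finset.Icc 1 (f - 3) := fun m => hI (Finset.orderEmbOfFin_mem I cI m)
  have mq : ∀ m, q m ∈ Finset.Icc 1 (f - 3) := fun m => hJ (Finset.orderEmbOfFin_mem J cJ m)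
  refine ⟨⟨Finset.univ.image (fun m => (p m, q m + 1)), ?_, ?_⟩, ?_, ?_⟩
  · intro c hc
    obtain ⟨m, _, rfl⟩ := Finset.mem_image.1 hc
    have h1 := Finset.mem_Icc.1 (mp m)
    have h2 := Finset.mem_Icc.1 (mq m)
    have h3 := hle m
    simp only
    omega
  · intro c hc d hd hne
    obtain ⟨m, _, rfl⟩ := Finset.mem_image.1 hc
    obtain ⟨m', _, rfl⟩ := Finset.mem_image.1 hd
    rcases lt_trichotomy m m' with h | h | h
    · left; exact ⟨p.strictMono h, by simpa using h⟩
    · subst h; exact absurd rfl hne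
    · right; exact ⟨p.strictMono h, by simpa using h⟩
  · rw [bI, Finset.image_image]
    exact Finset.image_orderEmbOfFin_univ I cI
  · rw [bJ, Finset.image_image]
    exact Finset.image_orderEmbOfFin_univ J cJ

lemma exists_dual {f : ℕ} (hf : 3 ≤ f) (b : Bf f) : ∃ b' : Bf f,
    bI b'.1 = Finset.Icc 1 (f - 3) \ bJ b.1 ∧ bJ b'.1 = Finset.Icc 1 (f - 3) \ bI b.1 := by
  have h1 := b.2.bI_sub
  have h2 := b.2.bJ_sub
  refine exists_build hf _ _ Finset.sdiff_subset Finset.sdiff_subset (f - 3 - b.1.card) ?_ ?_ ?_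
  · rw [Finset.card_sdiff_of_subset h2, b.2.card_bJ]; simp
  · rw [Finset.card_sdiff_of_subset h1, b.2.card_bI]; simp
  · intro t
    have e : ∀ K : Finset ℕ, K ⊆ Finset.Icc 1 (f - 3) →
        ((Finset.Icc 1 (f - 3) \ K).filter (· ≤ t)).card =
        ((Finset.Icc 1 (f - 3)).filter (· ≤ t)).card - (K.filter (· ≤ t)).card := by
      intro K hK
      rw [← Finset.card_sdiff_of_subset (Finset.filter_subset_filter _ hK)]
      congr 1
      ext a
      simp only [Finset.mem_filter, Finset.mem_sdiff]
      tauto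
    rw [e _ h1, e _ h2]
    have := b.2.gale t
    omega

lemma sum_card {f : ℕ} (hf : 3 ≤ f) :
    2 * ∑ b : Bf f, b.1.card = Fintype.card (Bf f) * (f - 3) := by
  choose D hD using fun b : Bf f => exists_dual hf b
  have hinj : Function.Injective D := by
    intro b b' e
    have h1 := hD b
    have h2 := hD b'
    rw [e] at h1
    have k1 : bI b.1 = bI b'.1 := by
      have := h1.2.symm.trans h2.2
      rw [← Finset.sdiff_sdiff_eq_self b.2.bI_sub, this, Finset.sdiff_sdiff_eq_self b'.2.bI_sub]
    have k2 : bJ b.1 = bJ b'.1 := by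
      have := h1.1.symm.trans h2.1
      rw [← Finset.sdiff_sdiff_eq_self b.2.bJ_sub, this, Finset.sdiff_sdiff_eq_self b'.2.bJ_sub]
    exact Subtype.ext (b.2.ext b'.2 k1 k2)
  have hc : ∀ b : Bf f, b.1.card + (D b).1.card = f - 3 := by
    intro b
    rw [← (D b).2.card_bI, (hD b).1, Finset.card_sdiff_of_subset b.2.bJ_sub, b.2.card_bJ]
    have := Finset.card_le_card b.2.bJ_sub
    rw [b.2.card_bJ] at this
    simp at this ⊢
    omega
  have hbij := Finite.injective_iff_bijective.1 hinj
  have e : ∑ b : Bf f, (D b).1.card = ∑ b : Bf f, b.1.card :=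
    hbij.sum_comp (fun b : Bf f => b.1.card)
  calc 2 * ∑ b : Bf f, b.1.card = ∑ b : Bf f, b.1.card + ∑ b : Bf f, (D b).1.card := by rw [e]; ring
    _ = ∑ b : Bf f, (b.1.card + (D b).1.card) := by rw [Finset.sum_add_distrib]
    _ = _ := by simp only [hc]; simp

/-- The top chain. -/
def zB (f : ℕ) : Bf f := ⟨(Finset.Icc 1 (f - 3)).image (fun i => (i, i + 1)), by
  constructor
  · intro c hc
    obtain ⟨i, hi, rfl⟩ := Finset.mem_image.1 hc
    rw [Finset.mem_Icc] at hi
    simp only; omega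
  · intro c hc d hd hne
    obtain ⟨i, hi, rfl⟩ := Finset.mem_image.1 hc
    obtain ⟨j, hj, rfl⟩ := Finset.mem_image.1 hd
    have : i ≠ j := by rintro rfl; exact hne rfl
    simp only; omega⟩

lemma card_zB (f : ℕ) : (zB f).1.card = f - 3 := by
  simp only [zB]
  rw [Finset.card_image_of_injective _ (fun i j h => (Prod.ext_iff.1 h).1)]; simp

/-! ### The Gram matrix -/

/-- The Gram matrix of the trace form. -/
def gram {R A : Type*} [CommRing R] [CommRing A]
    {f : ℕ} (x : ℕ × ℕ → A) [Algebra (SP R f) A] (B : Module.Basis (Bf f) (SP R f) A) :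
    Matrix (Bf f) (Bf f) (SP R f) :=
  fun b c => B.repr (xm x b.1.val * xm x c.1.val) (zB f)

lemma gram_det_const {R A : Type*} [CommRing R] [CommRing A] [Algebra R A]
    {f : ℕ} (hf : 3 ≤ f) {x : ℕ × ℕ → A} (hP : Pfr f x) [Algebra (SP R f) A]
    (hT : ∀ s, algebraMap (SP R f) A s = Th x f s) (B : Module.Basis (Bf f) (SP R f) A)
    (hB : ∀ b, B b = xm x b.1.val) : ∃ δ : R, (gram x B).det = MvPolynomial.C δ := by
  have hent : ∀ b c, gram x B b c = 0 ∨ ∃ d, d + (f - 3) = b.1.card + c.1.card ∧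
      (gram x B b c).IsHomogeneous d := by
    intro b c
    have := repr_homog hP hT B hB (b.1.val + c.1.val) (by
      intro e he
      rcases Multiset.mem_add.1 he with he | he
      · exact b.2.sub he
      · exact c.2.sub he) (zB f)
    rw [xm_add, card_zB] at this
    simpa [gram] using this
  have hdet : (gram x B).det ∈ MvPolynomial.homogeneousSubmodule (Fin (2 * f - 3)) R 0 := by
    rw [Matrix.det_apply]
    refine Submodule.sum_mem _ (fun τ _ => ?_)
    have hprod : ∏ i, gram x B (τ i) i ∈ MvPolynomial.homogeneousSubmodule (Fin (2 * f - 3)) R 0 := by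
      by_cases h0 : ∃ i, gram x B (τ i) i = 0
      · obtain ⟨i, hi⟩ := h0
        rw [Finset.prod_eq_zero (f := fun i => gram x B (τ i) i) (Finset.mem_univ i) hi]
        exact Submodule.zero_mem _
      · push Not at h0
        have : ∀ i, ∃ d, d + (f - 3) = (τ i).1.card + i.1.card ∧
            (gram x B (τ i) i).IsHomogeneous d := fun i => (hent (τ i) i).resolve_left (h0 i)
        choose d hd hh using this
        have hp := MvPolynomial.IsHomogeneous.prod Finset.univ (fun i => gram x B (τ i) i) d
          (fun i _ => hh i)
        have hs : ∑ i, d i = 0 := by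
          have h1 : ∑ i, (d i + (f - 3)) = ∑ i, ((τ i).1.card + i.1.card) :=
            Finset.sum_congr rfl (fun i _ => hd i)
          rw [Finset.sum_add_distrib, Finset.sum_add_distrib,
            Equiv.sum_comp τ (fun b : Bf f => b.1.card)] at h1
          have h2 := sum_card hf
          simp only [Finset.sum_const, Finset.card_univ, smul_eq_mul] at h1
          omega
        rw [hs] at hp
        exact hp
    rw [Units.smul_def]
    exact Submodule.smul_of_tower_mem _ _ hprod
  rw [MvPolynomial.homogeneousSubmodule_zero] at hdet
  obtain ⟨δ, hδ⟩ := hdet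
  refine ⟨δ, hδ.symm.trans ?_⟩
  rw [LinearMap.toSpanSingleton_apply, MvPolynomial.smul_eq_C_mul, mul_one]

/-! ### Perfectness of the trace form -/

lemma gram_det_ne_zero {R A : Type*} [CommRing R] [IsDomain R] [CommRing A] [Algebra R A]
    {f : ℕ} {x : ℕ × ℕ → A} (h : IsModel R f x) [Algebra (SP R f) A]
    (B : Module.Basis (Bf f) (SP R f) A)
    (hB : ∀ b, B b = xm x b.1.val) : (gram x B).det ≠ 0 := by
  intro h0
  obtain ⟨v, hv, hv0⟩ := Matrix.exists_vecMul_eq_zero_iff.2 h0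
  have : IsDomain A := h.isDomain
  set a := ∑ b, v b • B b with ha
  have hr : ⇑(B.repr a) = v := B.repr_sum_self v
  have hane : a ≠ 0 := by
    intro e
    rw [e] at hr
    apply hv
    rw [← hr]; simp
  have hsig : ∀ c, B.repr (a * c) (zB f) = 0 := by
    intro c
    rw [← B.sum_repr c, Finset.mul_sum, map_sum, Finsupp.finsetSum_apply]
    refine Finset.sum_eq_zero (fun d _ => ?_)
    rw [mul_smul_comm, map_smul, Finsupp.smul_apply]
    have := congrFun hv0 d
    rw [Pi.zero_apply, Matrix.vecMul, dotProduct] at this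
    rw [ha, Finset.sum_mul, map_sum, Finsupp.finsetSum_apply]
    have e : ∑ b, (B.repr (v b • B b * B d)) (zB f) = ∑ b, v b * gram x B b d := by
      refine Finset.sum_congr rfl (fun b _ => ?_)
      rw [smul_mul_assoc, map_smul, Finsupp.smul_apply, gram, hB, hB, smul_eq_mul]
    rw [e, this, smul_zero]
  have hfin : Module.Finite (SP R f) A := Module.Finite.of_basis B
  have hfree : Module.Free (SP R f) A := Module.Free.of_basis B
  have hintg : IsIntegral (SP R f) a := Algebra.IsIntegral.isIntegral a
  obtain ⟨s, hs, c, hc⟩ := hintg.isAlgebraic.exists_nonzero_dvd (mem_nonZeroDivisors_of_ne_zero hane)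
  have h1 := hsig (c * B (zB f))
  rw [← mul_assoc, ← hc, ← Algebra.smul_def, map_smul, Finsupp.smul_apply, B.repr_self,
    Finsupp.single_eq_same, smul_eq_mul, mul_one] at h1
  exact hs h1

lemma gram_base_change {R R' A A' : Type*} [CommRing R] [IsDomain R] [CommRing A] [Algebra R A]
    [CommRing R'] [IsDomain R'] [CommRing A'] [Algebra R' A']
    {f : ℕ} {x : ℕ × ℕ → A} (h : IsModel R f x) [Algebra (SP R f) A]
    (hT : ∀ s, algebraMap (SP R f) A s = Th x f s) (B : Module.Basis (Bf f) (SP R f) A)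
    (hB : ∀ b, B b = xm x b.1.val)
    {x' : ℕ × ℕ → A'} (h' : IsModel R' f x') [Algebra (SP R' f) A']
    (hT' : ∀ s, algebraMap (SP R' f) A' s = Th x' f s) (B' : Module.Basis (Bf f) (SP R' f) A')
    (hB' : ∀ b, B' b = xm x' b.1.val) (π : R →+* R') :
    gram x' B' = (gram x B).map (MvPolynomial.map π) := by
  obtain ⟨ψ, hψ⟩ := h.ex_map
  obtain ⟨ψ', hψ'⟩ := h'.ex_map
  ext1 b c
  let g : A →+* MvPolynomial (ℕ ⊕ ℕ) R' := (MvPolynomial.map π).comp (ψ : A →+* _)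
  have hg : ∀ c ∈ cells f, g (x c) = xY R' c := by
    intro c hc
    simp only [g, RingHom.comp_apply, RingHom.coe_coe, hψ c hc]
    simp [xY]
  have hgR : ∀ r, g (algebraMap R A r) = algebraMap R' _ (π r) := by
    intro r
    simp [g, MvPolynomial.algebraMap_eq]
  have e1 := map_TT π g hgR x (xY R') f hg (B.repr (xm x b.1.val * xm x c.1.val))
  rw [TT_basis_repr hT B hB, map_mul, map_xm g x (xY R') f hg _ (fun c hc => b.2.sub hc),
    map_xm g x (xY R') f hg _ (fun d hc => c.2.sub hc)] at e1
  have e2 := psi_TT ψ' hψ' (B'.repr (xm x' b.1.val * xm x' c.1.val))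
  rw [TT_basis_repr hT' B' hB', map_mul] at e2
  have k1 := map_xm (ψ' : A' →+* _) x' (xY R') f hψ' _ (fun c hc => b.2.sub hc)
  have k2 := map_xm (ψ' : A' →+* _) x' (xY R') f hψ' _ (fun d hc => c.2.sub hc)
  simp only [RingHom.coe_coe] at k1 k2
  rw [k1, k2, e1] at e2
  have e3 := TTY_inj R' f (_ - _) (by rw [TT_sub]; exact sub_eq_zero.2 e2)
  have e4 := congrFun (sub_eq_zero.1 e3) (zB f)
  rw [Matrix.map_apply]
  exact e4.symm

/-- A linear functional inducing a perfect self pairing. -/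
def IsPerf {S A : Type*} [CommRing S] [CommRing A] [Algebra S A] (σ : A →ₗ[S] S) : Prop :=
  ∀ τ : A →ₗ[S] S, ∃! a, ∀ c, σ (a * c) = τ c

lemma isPerf_of_gram {S A ι : Type*} [CommRing S] [CommRing A] [Algebra S A] [Fintype ι]
    [DecidableEq ι] (B : Module.Basis ι S A) (σ : A →ₗ[S] S) (G : Matrix ι ι S)
    (hG : ∀ b c, G b c = σ (B b * B c)) (hdet : IsUnit G.det) : IsPerf σ := by
  have key : ∀ v : ι → S, ∀ d, σ ((∑ b, v b • B b) * B d) = Matrix.vecMul v G d := by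
    intro v d
    rw [Finset.sum_mul, map_sum, Matrix.vecMul, dotProduct]
    refine Finset.sum_congr rfl (fun b _ => ?_)
    rw [smul_mul_assoc, map_smul, hG, smul_eq_mul]
  intro τ
  refine ⟨∑ b, (Matrix.vecMul (fun c => τ (B c)) G⁻¹) b • B b, ?_, ?_⟩
  · intro c
    have : (σ.comp (LinearMap.mulLeft S (∑ b, (Matrix.vecMul (fun c => τ (B c)) G⁻¹) b • B b))) = τ := by
      refine B.ext (fun d => ?_)
      rw [LinearMap.comp_apply, LinearMap.mulLeft_apply, key, Matrix.vecMul_vecMul,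
        Matrix.nonsing_inv_mul _ hdet, Matrix.vecMul_one]
    exact LinearMap.congr_fun this c
  · intro a ha
    have e : Matrix.vecMul (B.repr a) G = fun c => τ (B c) := by
      funext d
      rw [← key, B.sum_repr, ha]
    rw [← e, Matrix.vecMul_vecMul, Matrix.mul_nonsing_inv _ hdet, Matrix.vecMul_one, B.sum_repr]

/-! ### The quotient ring is a model -/

/-- The coordinate ring. -/
abbrev AQ (R : Type u) [CommRing R] (f : ℕ) := MvPolynomial (P2 f) R ⧸ Pf4 R f

/-- The coordinates. -/
def xq (R : Type u) [CommRing R] (f : ℕ) (c : ℕ × ℕ) : AQ R f :=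
  if h : c.1 < c.2 ∧ c.2 < f then
    Ideal.Quotient.mk _ (MvPolynomial.X ⟨(⟨c.1, h.1.trans h.2⟩, ⟨c.2, h.2⟩), h.1⟩) else 0

lemma xq_eq (R : Type u) [CommRing R] (f : ℕ) (i j : Fin f) (h : i < j) :
    xq R f (i, j) = Ideal.Quotient.mk _ (MvPolynomial.X ⟨(i, j), h⟩) := by
  have h' : (i : ℕ) < j ∧ (j : ℕ) < f := ⟨h, j.2⟩
  rw [xq, dif_pos h']

lemma xv_lt (R : Type u) [CommRing R] (f : ℕ) (i j : Fin f) (h : i < j) :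
    xv R f i j = MvPolynomial.X ⟨(i, j), h⟩ := by rw [xv, dif_pos h]

theorem isModel_AQ (R : Type u) [CommRing R] (f : ℕ) : IsModel R f (xq R f) := by
  constructor
  · intro i j k l hij hjk hkl hl
    have hm : pf4 R f ⟨i, by omega⟩ ⟨j, by omega⟩ ⟨k, by omega⟩ ⟨l, hl⟩ ∈ Pf4 R f :=
      Ideal.subset_span ⟨_, _, _, _, hij, hjk, hkl, rfl⟩
    rw [← Ideal.Quotient.eq_zero_iff_mem, pf4] at hm
    rw [xv_lt R f ⟨i, by omega⟩ ⟨j, by omega⟩ hij, xv_lt R f ⟨k, by omega⟩ ⟨l, by omega⟩ hkl,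
      xv_lt R f ⟨i, by omega⟩ ⟨k, by omega⟩ (hij.trans hjk),
      xv_lt R f ⟨j, by omega⟩ ⟨l, by omega⟩ (hjk.trans hkl),
      xv_lt R f ⟨i, by omega⟩ ⟨l, by omega⟩ (hij.trans (hjk.trans hkl)),
      xv_lt R f ⟨j, by omega⟩ ⟨k, by omega⟩ hjk] at hm
    simp only [map_add, map_sub, map_mul, ← xq_eq] at hm
    linear_combination hm
  · rw [eq_top_iff]
    intro a _
    obtain ⟨p, rfl⟩ := Ideal.Quotient.mk_surjective a
    induction p using MvPolynomial.induction_on with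
    | C r => exact Subalgebra.algebraMap_mem _ r
    | add p q hp hq => rw [map_add]; exact Subalgebra.add_mem _ (hp trivial) (hq trivial)
    | mul_X p k hp =>
      rw [map_mul]
      refine Subalgebra.mul_mem _ (hp trivial) (Algebra.subset_adjoin ⟨(k.1.1, k.1.2), ?_, ?_⟩)
      · exact mem_cells.2 ⟨k.2, k.1.2.2⟩
      · rw [xq_eq R f _ _ k.2]
  · refine ⟨Ideal.Quotient.liftₐ (Pf4 R f)
      (MvPolynomial.aeval (fun p : P2 f => xY R (p.1.1, p.1.2))) ?_, ?_⟩
    · intro a ha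
      have : Pf4 R f ≤ RingHom.ker (MvPolynomial.aeval (R := R) (fun p : P2 f => xY R (p.1.1, p.1.2))) := by
        rw [Pf4, Ideal.span_le]
        rintro _ ⟨i, j, k, l, hij, hjk, hkl, rfl⟩
        rw [SetLike.mem_coe, RingHom.mem_ker, pf4, xv_lt R f _ _ hij, xv_lt R f _ _ hkl,
          xv_lt R f _ _ (hij.trans hjk), xv_lt R f _ _ (hjk.trans hkl),
          xv_lt R f _ _ (hij.trans (hjk.trans hkl)), xv_lt R f _ _ hjk]
        simp only [map_add, map_sub, map_mul, MvPolynomial.aeval_X, xY]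
        ring
      exact this ha
    · intro c hc
      rw [mem_cells] at hc
      rw [xq, dif_pos hc]
      exact (MvPolynomial.aeval_X _ _)

/-- The trace form of the coordinate ring is perfect. -/
theorem perf_AQ (R : Type u) [CommRing R] [IsDomain R] (f : ℕ) (hf : 3 ≤ f)
    [Algebra (SP R f) (AQ R f)] (hT : ∀ s, algebraMap (SP R f) (AQ R f) s = Th (xq R f) f s)
    (B : Module.Basis (Bf f) (SP R f) (AQ R f)) (hB : ∀ b, B b = xm (xq R f) b.1.val) :
    IsPerf (B.coord (zB f)) := by
  have hM := isModel_AQ R f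
  refine isPerf_of_gram B _ (gram (xq R f) B) (fun b c => by rw [gram, hB, hB]; rfl) ?_
  obtain ⟨δ, hδ⟩ := gram_det_const hf hM.pfr hT B hB
  rw [hδ]
  refine IsUnit.map _ ?_
  by_contra hu
  obtain ⟨m, hm, hδm⟩ := exists_max_ideal_of_mem_nonunits hu
  have hprime : m.IsPrime := hm.isPrime
  have hdom : IsDomain (R ⧸ m) := Ideal.Quotient.isDomain m
  let _ : Algebra (SP (R ⧸ m) f) (AQ (R ⧸ m) f) := (Th (xq (R ⧸ m) f) f).toRingHom.toAlgebra
  have hT' : ∀ s, algebraMap (SP (R ⧸ m) f) (AQ (R ⧸ m) f) s = Th (xq (R ⧸ m) f) f s := fun _ => rfl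
  have hM' := isModel_AQ (R ⧸ m) f
  obtain ⟨B', hB'⟩ := hM'.exists_basis hT'
  have h1 := gram_det_ne_zero hM' B' hB'
  rw [gram_base_change hM hT B hB hM' hT' B' hB' (Ideal.Quotient.mk m)] at h1
  apply h1
  rw [← RingHom.mapMatrix_apply, ← RingHom.map_det, hδ, MvPolynomial.map_C,
    Ideal.Quotient.eq_zero_iff_mem.2 hδm, map_zero]

/-! ### The column module -/

/-- Entries of the alternating matrix. -/
def xa {A : Type*} [CommRing A] (x : ℕ × ℕ → A) (i j : ℕ) : A :=
  if i < j then x (i, j) else if j < i then - x (j, i) else 0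

/-- Columns of the alternating matrix. -/
def yc {A : Type*} [CommRing A] (x : ℕ × ℕ → A) (f : ℕ) (j : ℕ) : Fin f → A := fun i => xa x i j

/-- The column module. -/
def NN {A : Type*} [CommRing A] (x : ℕ × ℕ → A) (f : ℕ) : Submodule A (Fin f → A) :=
  Submodule.span A (Set.range (fun j : Fin f => yc x f j))

lemma yc_mem {A : Type*} [CommRing A] (x : ℕ × ℕ → A) (f : ℕ) (j : ℕ) (hj : j < f) :
    yc x f j ∈ NN x f := Submodule.subset_span ⟨⟨j, hj⟩, rfl⟩

lemma xa_lt {A : Type*} [CommRing A] (x : ℕ × ℕ → A) {i j : ℕ} (h : i < j) :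
    xa x i j = x (i, j) := by rw [xa, if_pos h]

lemma xa_gt {A : Type*} [CommRing A] (x : ℕ × ℕ → A) {i j : ℕ} (h : j < i) :
    xa x i j = - x (j, i) := by rw [xa, if_neg (by omega), if_pos h]

lemma xa_self {A : Type*} [CommRing A] (x : ℕ × ℕ → A) (i : ℕ) :
    xa x i i = 0 := by simp [xa]

lemma psi_xa {R A : Type*} [CommRing R] [CommRing A] [Algebra R A] {f : ℕ}
    {x : ℕ × ℕ → A} (ψ : A →ₐ[R] MvPolynomial (ℕ ⊕ ℕ) R) (hψ : ∀ c ∈ cells f, ψ (x c) = xY R c)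
    (i j : ℕ) (hi : i < f) (hj : j < f) : ψ (xa x i j) = xY R (i, j) := by
  rcases lt_trichotomy i j with h | h | h
  · rw [xa_lt x h, hψ _ (mem_cells.2 ⟨h, hj⟩)]
  · subst h; rw [xa_self, map_zero, xY]; ring
  · rw [xa_gt x h, map_neg, hψ _ (mem_cells.2 ⟨h, hi⟩)]; simp only [xY]; ring

section
variable {R A : Type*} [CommRing R] [IsDomain R] [CommRing A] [Algebra R A] {f : ℕ}
  {x : ℕ × ℕ → A}

lemma IsModel.xa_rel (h : IsModel R f x) (a b c d : ℕ) (ha : a < f) (hb : b < f) (hc : c < f)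
    (hd : d < f) : xa x a b * xa x d c - xa x a c * xa x d b + xa x b c * xa x d a = 0 := by
  obtain ⟨ψ, hψ⟩ := h.ex_map
  apply h.psi_inj ψ hψ
  simp only [map_add, map_sub, map_mul, map_zero]
  rw [psi_xa ψ hψ _ _ ha hb, psi_xa ψ hψ _ _ hd hc, psi_xa ψ hψ _ _ ha hc, psi_xa ψ hψ _ _ hd hb,
    psi_xa ψ hψ _ _ hb hc, psi_xa ψ hψ _ _ hd ha]
  simp only [xY]; ring

lemma IsModel.yc_rel (h : IsModel R f x) (a b c : ℕ) (ha : a < f) (hb : b < f) (hc : c < f) :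
    xa x a b • yc x f c - xa x a c • yc x f b + xa x b c • yc x f a = 0 := by
  funext d
  exact h.xa_rel a b c d ha hb hc d.2

lemma IsModel.x_ne_zero (h : IsModel R f x) (c : ℕ × ℕ) (hc : c ∈ cells f) : x c ≠ 0 := by
  obtain ⟨ψ, hψ⟩ := h.ex_map
  intro h0
  have h1 := hψ c hc
  rw [h0, map_zero] at h1
  have h2 := degen_lead R c (mem_cells.1 hc).1
  rw [← h1, map_zero, Polynomial.leadingCoeff_zero] at h2
  exact mul_ne_zero (MvPolynomial.X_ne_zero _) (MvPolynomial.X_ne_zero _) h2.symm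

lemma IsModel.NN_rel (h : IsModel R f x) (a e : ℕ) (ha : a < f) (he : e < f)
    (n : Fin f → A) (hn : n ∈ NN x f) :
    xa x a e • n - n ⟨a, ha⟩ • yc x f e + n ⟨e, he⟩ • yc x f a = 0 := by
  induction hn using Submodule.span_induction with
  | zero => simp
  | mem y hy =>
    obtain ⟨j, rfl⟩ := hy
    exact h.yc_rel a e j ha he j.2
  | add y z _ _ hy hz =>
    rw [Pi.add_apply, Pi.add_apply]
    have : xa x a e • (y + z) - (y ⟨a, ha⟩ + z ⟨a, ha⟩) • yc x f e +
      (y ⟨e, he⟩ + z ⟨e, he⟩) • yc x f a = (xa x a e • y - y ⟨a, ha⟩ • yc x f e +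
      y ⟨e, he⟩ • yc x f a) + (xa x a e • z - z ⟨a, ha⟩ • yc x f e +
      z ⟨e, he⟩ • yc x f a) := by module
    rw [this, hy, hz, add_zero]
  | smul r y _ hy =>
    rw [Pi.smul_apply, Pi.smul_apply, smul_eq_mul, smul_eq_mul]
    have : xa x a e • (r • y) - (r * y ⟨a, ha⟩) • yc x f e + (r * y ⟨e, he⟩) • yc x f a =
      r • (xa x a e • y - y ⟨a, ha⟩ • yc x f e + y ⟨e, he⟩ • yc x f a) := by module
    rw [this, hy, smul_zero]

lemma th_last {A : Type*} [CommRing A] {f : ℕ} {x : ℕ × ℕ → A} (hf : 4 ≤ f) : th x f (2 * f - 3) = x (f - 2, f - 1) := by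
  rw [th]
  have : (cells f).filter (fun c => c.1 + c.2 = 2 * f - 3) = {(f - 2, f - 1)} := by
    ext c
    simp only [Finset.mem_filter, mem_cells, Finset.mem_singleton, Prod.ext_iff]
    omega
  rw [this, Finset.sum_singleton]

lemma th_last2 {A : Type*} [CommRing A] {f : ℕ} {x : ℕ × ℕ → A} (hf : 4 ≤ f) : th x f (2 * f - 4) = x (f - 3, f - 1) := by
  rw [th]
  have : (cells f).filter (fun c => c.1 + c.2 = 2 * f - 4) = {(f - 3, f - 1)} := by
    ext c
    simp only [Finset.mem_filter, mem_cells, Finset.mem_singleton, Prod.ext_iff]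
    omega
  rw [this, Finset.sum_singleton]

/-- Last variable. -/
def kl (hf : 4 ≤ f) : Fin (2 * f - 3) := ⟨2 * f - 4, by omega⟩

/-- Last but one variable. -/
def kl2 (hf : 4 ≤ f) : Fin (2 * f - 3) := ⟨2 * f - 5, by omega⟩

lemma X_kl [Algebra (SP R f) A] (hT : ∀ s, algebraMap (SP R f) A s = Th x f s) (hf : 4 ≤ f) :
    algebraMap (SP R f) A (MvPolynomial.X (kl hf)) = x (f - 2, f - 1) := by
  rw [hT, Th, MvPolynomial.aeval_X, ← th_last (x := x) hf]
  congr 1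
  simp only [kl]; omega

lemma X_kl2 [Algebra (SP R f) A] (hT : ∀ s, algebraMap (SP R f) A s = Th x f s) (hf : 4 ≤ f) :
    algebraMap (SP R f) A (MvPolynomial.X (kl2 hf)) = x (f - 3, f - 1) := by
  rw [hT, Th, MvPolynomial.aeval_X, ← th_last2 (x := x) hf]
  congr 1
  simp only [kl2]; omega

/-- Elements of the column module with vanishing last coordinate. -/
lemma IsModel.ker_last (h : IsModel R f x) (hf : 4 ≤ f) [Algebra (SP R f) A]
    (hT : ∀ s, algebraMap (SP R f) A s = Th x f s) (n : Fin f → A) (hn : n ∈ NN x f)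
    (h0 : n ⟨f - 1, by omega⟩ = 0) : ∃ t : A, n = t • yc x f (f - 1) := by
  have hdom : IsDomain A := h.isDomain
  obtain ⟨B, hB⟩ := h.exists_basis hT
  have hrel := h.NN_rel (f - 2) (f - 1) (by omega) (by omega) n hn
  rw [h0, zero_smul, add_zero, sub_eq_zero, xa_lt x (by omega)] at hrel
  have h1 := congrFun hrel ⟨f - 3, by omega⟩
  simp only [Pi.smul_apply, smul_eq_mul, yc] at h1
  rw [xa_lt x (by omega), ← X_kl hT hf, ← X_kl2 hT hf] at h1
  have h1' : (MvPolynomial.X (kl hf) : SP R f) • n ⟨f - 3, by omega⟩ =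
      (MvPolynomial.X (kl2 hf) : SP R f) • n ⟨f - 2, by omega⟩ := by
    rw [Algebra.smul_def, Algebra.smul_def, h1]; ring
  have hdvd : ∀ b, MvPolynomial.X (kl hf) ∣ B.repr (n ⟨f - 2, by omega⟩) b := by
    intro b
    have h2 := congrArg (fun a => B.repr a b) h1'
    simp only [map_smul, Finsupp.smul_apply, smul_eq_mul] at h2
    have h3 : (MvPolynomial.X (kl hf) : SP R f) ∣
        MvPolynomial.X (kl2 hf) * B.repr (n ⟨f - 2, by omega⟩) b := ⟨_, h2.symm⟩
    refine ((MvPolynomial.X_prime (R := R) (i := kl hf)).dvd_or_dvd h3).resolve_left ?_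
    rw [MvPolynomial.X_dvd_X]
    simp [kl, kl2]
    omega
  choose t ht using hdvd
  refine ⟨∑ b, t b • B b, ?_⟩
  have h4 : n ⟨f - 2, by omega⟩ = x (f - 2, f - 1) * ∑ b, t b • B b := by
    rw [← X_kl hT hf, ← Algebra.smul_def, Finset.smul_sum]
    conv_lhs => rw [← B.sum_repr (n ⟨f - 2, by omega⟩)]
    refine Finset.sum_congr rfl (fun b _ => ?_)
    rw [ht, mul_smul]
  rw [h4, mul_smul] at hrel
  have hx := h.x_ne_zero (f - 2, f - 1) (mem_cells.2 ⟨by simp only; omega, by simp only; omega⟩)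
  funext i
  have := congrFun hrel i
  simp only [Pi.smul_apply, smul_eq_mul] at this
  exact mul_left_cancel₀ hx this
end

/-! ### The column module is free over the parameter ring -/

/-- First family of generators. -/
def G1 {A : Type*} [CommRing A] (x : ℕ × ℕ → A) (f : ℕ) (b : Finset (ℕ × ℕ)) : Fin f → A :=
  if (f - 3, f - 2) ∈ b then xm x (b.erase (f - 3, f - 2)).val • yc x f (f - 2)
  else xm x b.val • yc x f (f - 1)

open Classical in
/-- Second family of generators. -/
def G2 {A : Type*} [CommRing A] (x : ℕ × ℕ → A) (f : ℕ) (b : Finset (ℕ × ℕ)) : Fin f → A :=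
  if h : ∃ i, (i, f - 2) ∈ b then xm x (b.erase (h.choose, f - 2)).val • yc x f (h.choose - 1)
  else xm x b.val • yc x f (f - 3)

/-- All generators. -/
def GG {A : Type*} [CommRing A] (x : ℕ × ℕ → A) (f : ℕ) (p : Bf f × Bool) : Fin f → A :=
  if p.2 then G2 x f p.1.1 else G1 x f p.1.1

lemma isB.col {f : ℕ} {b : Finset (ℕ × ℕ)} (h : isB f b) {i i' j : ℕ} (h1 : (i, j) ∈ b)
    (h2 : (i', j) ∈ b) : i = i' := by
  by_contra hne
  have := h.2 _ h1 _ h2 (by simpa using hne)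
  simp only at this; omega

lemma G2_pos {A : Type*} [CommRing A] (x : ℕ × ℕ → A) (f : ℕ) {b : Finset (ℕ × ℕ)} (hb : isB f b)
    {i : ℕ} (hi : (i, f - 2) ∈ b) :
    G2 x f b = xm x (b.erase (i, f - 2)).val • yc x f (i - 1) := by
  have h : ∃ i, (i, f - 2) ∈ b := ⟨i, hi⟩
  rw [G2, dif_pos h, hb.col h.choose_spec hi]

lemma G2_neg {A : Type*} [CommRing A] (x : ℕ × ℕ → A) (f : ℕ) {b : Finset (ℕ × ℕ)}
    (hi : ∀ i, (i, f - 2) ∉ b) : G2 x f b = xm x b.val • yc x f (f - 3) := by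
  rw [G2, dif_neg (by simpa using hi)]

lemma isB.mono {f : ℕ} {b c : Finset (ℕ × ℕ)} (h : isB f b) (hc : c ⊆ b) : isB f c :=
  ⟨fun a ha => h.1 a (hc ha), fun a ha d hd => h.2 a (hc ha) d (hc hd)⟩

lemma isB.lift {f : ℕ} {b : Finset (ℕ × ℕ)} (h : isB (f - 1) b) : isB f b :=
  ⟨fun a ha => by have := h.1 a ha; omega, h.2⟩

lemma isB.lower {f : ℕ} {b : Finset (ℕ × ℕ)} (h : isB f b) (hi : ∀ i, (i, f - 2) ∉ b) :
    isB (f - 1) b := by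
  refine ⟨fun a ha => ?_, h.2⟩
  have h1 := h.1 a ha
  have h2 : a.2 ≠ f - 2 := by
    intro h2
    apply hi a.1
    rw [← h2]; exact ha
  omega

lemma isB.not_col {f : ℕ} (hf : 4 ≤ f) {b : Finset (ℕ × ℕ)} (h : isB (f - 1) b) (i : ℕ) :
    (i, f - 2) ∉ b := by
  intro hi
  have := h.1 _ hi
  simp only at this; omega

lemma isB.insert_top {f : ℕ} (hf : 4 ≤ f) {b : Finset (ℕ × ℕ)} (h : isB (f - 1) b) :
    isB f (insert (f - 3, f - 2) b) := by
  constructor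
  · intro c hc
    rcases Finset.mem_insert.1 hc with rfl | hc
    · simp only; omega
    · have := h.1 c hc; omega
  · intro c hc d hd hne
    rcases Finset.mem_insert.1 hc with rfl | hc <;> rcases Finset.mem_insert.1 hd with rfl | hd
    · exact absurd rfl hne
    · right
      have := h.1 d hd; simp only; omega
    · left
      have := h.1 c hc; simp only; omega
    · exact h.2 c hc d hd hne

lemma isB.erase_top {f : ℕ} {b : Finset (ℕ × ℕ)} (h : isB f b) {i : ℕ} (hi : (i, f - 2) ∈ b) :
    isB (f - 1) (b.erase (i, f - 2)) := by
  apply (h.mono (Finset.erase_subset _ _)).lower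
  intro j hj
  have := h.col hi (Finset.mem_of_mem_erase hj)
  subst this
  simp at hj

lemma smul_yc_last {A : Type*} [CommRing A] (x : ℕ × ℕ → A) {f : ℕ} (a : A) (j : ℕ) (hj : j < f - 1) :
    (a • yc x f j) ⟨f - 1, by omega⟩ = - (a * x (j, f - 1)) := by
  simp only [Pi.smul_apply, yc, smul_eq_mul]
  rw [xa_gt x hj]; ring

lemma smul_yc_last_self {A : Type*} [CommRing A] (x : ℕ × ℕ → A) {f : ℕ} (hf : 4 ≤ f) (a : A) :
    (a • yc x f (f - 1)) ⟨f - 1, by omega⟩ = 0 := by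
  simp only [Pi.smul_apply, yc, smul_eq_mul]
  rw [xa_self x]; ring

lemma GG_mem {A : Type*} [CommRing A] (x : ℕ × ℕ → A) {f : ℕ} (hf : 4 ≤ f) (p : Bf f × Bool) :
    GG x f p ∈ NN x f := by
  obtain ⟨b, t⟩ := p
  cases t
  · simp only [GG, G1, Bool.false_eq_true, if_false]
    split_ifs
    · exact Submodule.smul_mem _ _ (yc_mem x f _ (by omega))
    · exact Submodule.smul_mem _ _ (yc_mem x f _ (by omega))
  · simp only [GG, if_true]
    by_cases h : ∃ i, (i, f - 2) ∈ b.1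
    · obtain ⟨i, hi⟩ := h
      rw [G2_pos x f b.2 hi]
      have := b.2.1 _ hi
      exact Submodule.smul_mem _ _ (yc_mem x f _ (by simp only at this; omega))
    · rw [G2_neg x f (by simpa using h)]
      exact Submodule.smul_mem _ _ (yc_mem x f _ (by omega))

/-- Killing the last variables. -/
def chi (R : Type*) [CommRing R] (e : ℕ) : MvPolynomial (ℕ ⊕ ℕ) R →ₐ[R] MvPolynomial (ℕ ⊕ ℕ) R :=
  MvPolynomial.aeval (Sum.elim (fun i => if i = e then 0 else MvPolynomial.X (Sum.inl i))
    (fun i => if i = e then 0 else MvPolynomial.X (Sum.inr i)))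

lemma chi_last (R : Type*) [CommRing R] (e i : ℕ) : chi R e (xY R (i, e)) = 0 := by
  simp [chi, xY]

lemma chi_other (R : Type*) [CommRing R] (e i j : ℕ) (hi : i ≠ e) (hj : j ≠ e) :
    chi R e (xY R (i, j)) = xY R (i, j) := by
  simp [chi, xY, hi, hj]

/-- Inclusion of parameter rings. -/
def incl (R : Type*) [CommRing R] (f : ℕ) : SP R (f - 1) →ₐ[R] SP R f :=
  MvPolynomial.rename (Fin.castLE (by omega))

section
variable {R A : Type*} [CommRing R] [IsDomain R] [CommRing A] [Algebra R A] {f : ℕ}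
  {x : ℕ × ℕ → A}

lemma chi_psi_Th (hf : 4 ≤ f) (ψ : A →ₐ[R] MvPolynomial (ℕ ⊕ ℕ) R)
    (hψ : ∀ c ∈ cells f, ψ (x c) = xY R c) (s : SP R (f - 1)) :
    chi R (f - 1) (ψ (Th x f (incl R f s))) = Th (xY R) (f - 1) s := by
  have : ((chi R (f - 1)).comp (ψ.comp ((Th x f).comp (incl R f)))) = Th (xY R) (f - 1) := by
    apply MvPolynomial.algHom_ext
    intro k
    simp only [AlgHom.comp_apply, incl, MvPolynomial.rename_X, Th, MvPolynomial.aeval_X,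
      Fin.val_castLE, th, map_sum]
    symm
    apply Finset.sum_subset_zero_on_sdiff
    · intro c hc
      rw [Finset.mem_filter, mem_cells] at hc ⊢
      omega
    · intro c hc
      rw [Finset.mem_sdiff, Finset.mem_filter, Finset.mem_filter, mem_cells, mem_cells] at hc
      rw [hψ _ (mem_cells.2 hc.1.1)]
      have : c = (c.1, f - 1) := Prod.ext rfl (by simp only; omega)
      rw [this, chi_last]
    · intro c hc
      rw [Finset.mem_filter, mem_cells] at hc
      rw [hψ _ (mem_cells.2 (by omega)), chi_other R _ c.1 c.2 (by omega) (by omega)]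
  exact DFunLike.congr_fun this s

/-- The span of the last coordinates of the generators. -/
def MJ (R : Type*) {A : Type*} [CommRing R] [CommRing A] (x : ℕ × ℕ → A) {f : ℕ} (hf : 4 ≤ f)
    [Algebra (SP R f) A] : Submodule (SP R f) A :=
  Submodule.span (SP R f) (Set.range (fun p => GG x f p ⟨f - 1, by omega⟩))

lemma MJ_top {A : Type*} [CommRing A] (x : ℕ × ℕ → A) (hf : 4 ≤ f) [Algebra (SP R f) A]
    (b : Finset (ℕ × ℕ)) (hb : isB (f - 1) b) : xm x b.val * x (f - 2, f - 1) ∈ MJ R x hf := by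
  have h1 : GG x f ⟨⟨_, hb.insert_top hf⟩, false⟩ ⟨f - 1, by omega⟩ ∈ MJ R x hf :=
    Submodule.subset_span ⟨_, rfl⟩
  simp only [GG, G1, Bool.false_eq_true, if_false] at h1
  rw [if_pos (Finset.mem_insert_self _ _), smul_yc_last x _ _ (by omega), neg_mem_iff,
    Finset.erase_insert (hb.not_col hf _)] at h1
  exact h1

lemma MJ_top2 {A : Type*} [CommRing A] (x : ℕ × ℕ → A) (hf : 4 ≤ f) [Algebra (SP R f) A]
    (b : Finset (ℕ × ℕ)) (hb : isB (f - 1) b) : xm x b.val * x (f - 3, f - 1) ∈ MJ R x hf := by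
  have h1 : GG x f ⟨⟨_, hb.lift⟩, true⟩ ⟨f - 1, by omega⟩ ∈ MJ R x hf :=
    Submodule.subset_span ⟨_, rfl⟩
  simp only [GG, if_true] at h1
  rw [G2_neg x f (hb.not_col hf), smul_yc_last x _ _ (by omega), neg_mem_iff] at h1
  exact h1

lemma MJ_col {A : Type*} [CommRing A] (x : ℕ × ℕ → A) (hf : 4 ≤ f) [Algebra (SP R f) A]
    (b : Finset (ℕ × ℕ)) (hb : isB f b) (i : ℕ) (hi : (i, f - 2) ∈ b) :
    xm x (b.erase (i, f - 2)).val * x (i - 1, f - 1) ∈ MJ R x hf := by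
  have h1 : GG x f ⟨⟨_, hb⟩, true⟩ ⟨f - 1, by omega⟩ ∈ MJ R x hf :=
    Submodule.subset_span ⟨_, rfl⟩
  have := hb.1 _ hi
  simp only [GG, if_true] at h1
  rw [G2_pos x f hb hi, smul_yc_last x _ _ (by simp only at this; omega), neg_mem_iff] at h1
  exact h1

lemma MJ_ker [Algebra (SP R f) A] (hf : 4 ≤ f) (ψ : A →ₐ[R] MvPolynomial (ℕ ⊕ ℕ) R)
    (hψ : ∀ c ∈ cells f, ψ (x c) = xY R c) (a : A) (ha : a ∈ MJ R x hf) :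
    chi R (f - 1) (ψ a) = 0 := by
  have key : ∀ j, j < f - 1 → ∀ c : A, chi R (f - 1) (ψ ((c • yc x f j) ⟨f - 1, by omega⟩)) = 0 := by
    intro j hj c
    rw [smul_yc_last x _ _ hj, map_neg, map_mul, hψ _ (mem_cells.2 (by simp only; omega)), map_neg,
      map_mul, chi_last]; simp
  have hle : MJ R x hf ≤ (RingHom.ker ((chi R (f - 1)).comp ψ).toRingHom).restrictScalars
      (SP R f) := by
    rw [MJ, Submodule.span_le]
    rintro _ ⟨⟨b, t⟩, rfl⟩
    change chi R (f - 1) (ψ (GG x f (b, t) ⟨f - 1, by omega⟩)) = 0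
    cases t
    · simp only [GG, G1, Bool.false_eq_true, if_false]
      split_ifs
      · exact key _ (by omega) _
      · rw [smul_yc_last_self x hf, map_zero, map_zero]
    · simp only [GG, if_true]
      by_cases h : ∃ i, (i, f - 2) ∈ b.1
      · obtain ⟨i, hi⟩ := h
        rw [G2_pos x f b.2 hi]
        have := b.2.1 _ hi
        exact key _ (by simp only at this; omega) _
      · rw [G2_neg x f (by simpa using h)]
        exact key _ (by omega) _
  exact hle ha

end

/-- The auxiliary additive subgroup used for the rewriting of the last coordinates. -/
def QJ (R : Type*) {A : Type*} [CommRing R] [CommRing A] (x : ℕ × ℕ → A) {f : ℕ} (hf : 4 ≤ f)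
    [Algebra (SP R f) A] : AddSubgroup A where
  carrier := {a | ∃ m ∈ MJ R x hf, ∃ s : Bf (f - 1) → SP R (f - 1),
    a = m + ∑ b, incl R f (s b) • xm x b.1.val}
  zero_mem' := ⟨0, zero_mem _, 0, by simp⟩
  add_mem' := by
    rintro _ _ ⟨m, hm, s, rfl⟩ ⟨m', hm', s', rfl⟩
    refine ⟨m + m', add_mem hm hm', s + s', ?_⟩
    simp only [Pi.add_apply, map_add, add_smul, Finset.sum_add_distrib]
    abel
  neg_mem' := by
    rintro _ ⟨m, hm, s, rfl⟩
    refine ⟨-m, neg_mem hm, -s, ?_⟩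
    simp only [Pi.neg_apply, map_neg, neg_smul, Finset.sum_neg_distrib]
    abel

section
variable {R A : Type*} [CommRing R] [IsDomain R] [CommRing A] [Algebra R A] {f : ℕ}
  {x : ℕ × ℕ → A}

lemma MJ_le_QJ [Algebra (SP R f) A] (hf : 4 ≤ f) {a : A} (ha : a ∈ MJ R x hf) : a ∈ QJ R x hf :=
  ⟨a, ha, 0, by simp⟩

lemma QJ_th [Algebra (SP R f) A] (hT : ∀ s, algebraMap (SP R f) A s = Th x f s) (hf : 4 ≤ f)
    (r : ℕ) (a : A) (h1 : 1 ≤ r) (h2 : r + 3 ≤ 2 * f) (ha : a ∈ QJ R x hf) :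
    th x f r * a ∈ QJ R x hf := by
  obtain ⟨m, hm, s, rfl⟩ := ha
  have hr : th x f r = algebraMap (SP R f) A (MvPolynomial.X ⟨r - 1, by omega⟩) := by
    rw [hT, Th, MvPolynomial.aeval_X]
    simp only
    congr 1; omega
  rw [mul_add]
  refine add_mem (MJ_le_QJ hf ?_) ?_
  · rw [hr, ← Algebra.smul_def]
    exact Submodule.smul_mem _ _ hm
  rw [Finset.mul_sum]
  by_cases h3 : r + 3 ≤ 2 * (f - 1)
  · refine ⟨0, zero_mem _, fun b => MvPolynomial.X ⟨r - 1, by omega⟩ * s b, ?_⟩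
    rw [zero_add]
    refine Finset.sum_congr rfl (fun b _ => ?_)
    rw [hr, ← Algebra.smul_def, smul_smul, map_mul]
    congr 2
    simp only [incl, MvPolynomial.rename_X]
    rfl
  · refine sum_mem (fun b _ => MJ_le_QJ hf ?_)
    rw [mul_smul_comm]
    refine Submodule.smul_mem _ _ ?_
    rw [mul_comm (_ : A)]
    have h4 : r = 2 * f - 3 ∨ r = 2 * f - 4 := by omega
    rcases h4 with rfl | rfl
    · rw [th_last hf]; exact MJ_top x hf b.1 b.2
    · rw [th_last2 hf]; exact MJ_top2 x hf b.1 b.2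

lemma IsModel.xm_mem_QJ (h : IsModel R f x) [Algebra (SP R f) A]
    (hT : ∀ s, algebraMap (SP R f) A s = Th x f s) (hf : 4 ≤ f)
    (C : Multiset (ℕ × ℕ)) (hC : ∀ c ∈ C, c ∈ cells f) : xm x C ∈ QJ R x hf := by
  refine rewriteAll x f h.pfr (fun _ => QJ R x hf) (fun m r a h1 h2 ha => QJ_th hT hf r a h1 h2 ha)
    ?_ _ C hC rfl
  intro b hb
  by_cases hi : ∃ i, (i, f - 2) ∈ b
  · right
    obtain ⟨i, hi⟩ := hi
    refine ⟨_, hi, ?_⟩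
    intro c hc hr hlt
    apply MJ_le_QJ hf
    have h1 := hb.1 _ hi
    rw [mem_cells] at hc
    simp only at hr hlt h1
    have hc' : c = (i - 1, f - 1) := Prod.ext (by simp only; omega) (by simp only; omega)
    rw [hc', ← Finset.erase_val, mul_comm (_ : A)]
    exact MJ_col x hf b hb i hi
  · left
    have hi' : ∀ i, (i, f - 2) ∉ b := by simpa using hi
    refine ⟨0, zero_mem _, Pi.single ⟨b, hb.lower hi'⟩ 1, ?_⟩
    rw [zero_add, Finset.sum_eq_single ⟨b, hb.lower hi'⟩]
    · simp
    · intro b' _ hne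
      rw [Pi.single_eq_of_ne hne, map_zero, zero_smul]
    · simp

lemma IsModel.xm_mem_MJ (h : IsModel R f x) [Algebra (SP R f) A]
    (hT : ∀ s, algebraMap (SP R f) A s = Th x f s) (hf : 4 ≤ f)
    (C : Multiset (ℕ × ℕ)) (hC : ∀ c ∈ C, c ∈ cells f) (j : ℕ) (hj : j < f - 1) :
    x (j, f - 1) * xm x C ∈ MJ R x hf := by
  have hjc : (j, f - 1) ∈ cells f := mem_cells.2 (by simp only; omega)
  have h1 := h.xm_mem_QJ hT hf ((j, f - 1) ::ₘ C) (by
    intro c hc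
    rcases Multiset.mem_cons.1 hc with rfl | hc
    · exact hjc
    · exact hC c hc)
  rw [xm_cons] at h1
  obtain ⟨m, hm, s, hs⟩ := h1
  obtain ⟨ψ, hψ⟩ := h.ex_map
  have h2 : TT (xY R) (f - 1) s = 0 := by
    have h3 := congrArg (fun a => chi R (f - 1) (ψ a)) hs
    rw [map_mul, map_mul, hψ _ hjc, chi_last, zero_mul, map_add, map_add, MJ_ker hf ψ hψ m hm,
      zero_add, map_sum, map_sum] at h3
    rw [TT, h3]
    refine Finset.sum_congr rfl (fun b _ => ?_)
    rw [Algebra.smul_def, hT, map_mul, map_mul, chi_psi_Th hf ψ hψ]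
    congr 1
    symm
    refine map_xm (((chi R (f - 1)).comp ψ).toRingHom) x (xY R) (f - 1) ?_ _
      (fun c hc => b.2.sub hc)
    intro c hc
    rw [mem_cells] at hc
    change chi R (f - 1) (ψ (x c)) = xY R c
    rw [hψ _ (mem_cells.2 (by omega)), chi_other R _ c.1 c.2 (by omega) (by omega)]
  have h4 := TTY_inj R (f - 1) s h2
  subst h4
  rw [hs]
  simpa using hm

lemma IsModel.mul_mem_MJ (h : IsModel R f x) [Algebra (SP R f) A]
    (hT : ∀ s, algebraMap (SP R f) A s = Th x f s) (hf : 4 ≤ f)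
    (a : A) (j : ℕ) (hj : j < f - 1) : x (j, f - 1) * a ∈ MJ R x hf := by
  have ha : a ∈ Submodule.span R
      {a | ∃ C : Multiset (ℕ × ℕ), (∀ c ∈ C, c ∈ cells f) ∧ a = xm x C} := by
    rw [h.span_xm]; trivial
  induction ha using Submodule.span_induction with
  | zero => rw [mul_zero]; exact zero_mem _
  | mem y hy =>
    obtain ⟨C, hC, rfl⟩ := hy
    exact h.xm_mem_MJ hT hf C hC j hj
  | add y z _ _ hy hz => rw [mul_add]; exact add_mem hy hz
  | smul r y _ hy =>
    have : x (j, f - 1) * r • y = (MvPolynomial.C r : SP R f) • (x (j, f - 1) * y) := by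
      rw [Algebra.smul_def (MvPolynomial.C r), hT, Th, MvPolynomial.aeval_C, Algebra.smul_def]; ring
    rw [this]
    exact Submodule.smul_mem _ _ hy

lemma IsModel.last_mem_MJ (h : IsModel R f x) [Algebra (SP R f) A]
    (hT : ∀ s, algebraMap (SP R f) A s = Th x f s) (hf : 4 ≤ f)
    (n : Fin f → A) (hn : n ∈ NN x f) : n ⟨f - 1, by omega⟩ ∈ MJ R x hf := by
  rw [NN, Submodule.mem_span_range_iff_exists_fun] at hn
  obtain ⟨c, rfl⟩ := hn
  rw [Finset.sum_apply]
  refine sum_mem (fun j _ => ?_)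
  by_cases hj : (j : ℕ) < f - 1
  · rw [smul_yc_last x _ _ hj, neg_mem_iff, mul_comm (_ : A)]
    exact h.mul_mem_MJ hT hf _ _ hj
  · have hj' : (j : ℕ) = f - 1 := by omega
    rw [hj', smul_yc_last_self x hf]
    exact zero_mem _

/-- The span of the generators. -/
def NS (R : Type*) {A : Type*} [CommRing R] [CommRing A] (x : ℕ × ℕ → A) (f : ℕ)
    [Algebra (SP R f) A] : Submodule (SP R f) (Fin f → A) :=
  Submodule.span (SP R f) (Set.range (GG x f))

lemma IsModel.smul_last_mem (h : IsModel R f x) [Algebra (SP R f) A]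
    (hT : ∀ s, algebraMap (SP R f) A s = Th x f s) (hf : 4 ≤ f) (a : A) :
    a • yc x f (f - 1) ∈ NS R x f := by
  obtain ⟨B, hB⟩ := h.exists_basis hT
  rw [← B.sum_repr a, Finset.sum_smul]
  refine sum_mem (fun b _ => ?_)
  rw [smul_assoc]
  refine Submodule.smul_mem _ _ ?_
  rw [hB]
  by_cases ht : (f - 3, f - 2) ∈ b.1
  · have h1 := h.yc_rel (f - 3) (f - 2) (f - 1) (by omega) (by omega) (by omega)
    rw [xa_lt x (by omega), xa_lt x (by omega), xa_lt x (by omega), ← X_kl hT hf,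
      ← X_kl2 hT hf] at h1
    have hb' := b.2.erase_top ht
    have g1 : GG x f ⟨⟨_, b.2⟩, false⟩ ∈ NS R x f := Submodule.subset_span ⟨_, rfl⟩
    have g2 : GG x f ⟨⟨_, hb'.lift⟩, true⟩ ∈ NS R x f := Submodule.subset_span ⟨_, rfl⟩
    simp only [GG, G1, Bool.false_eq_true, if_false, if_true] at g1 g2
    rw [if_pos ht] at g1
    rw [G2_neg x f (hb'.not_col hf)] at g2
    set b' := b.1.erase (f - 3, f - 2) with hbd
    have e1 : xm x b.1.val = xm x b'.val * x (f - 3, f - 2) := by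
      rw [mul_comm, ← xm_cons, hbd, Finset.erase_val, Multiset.cons_erase ht]
    have e2 : xm x b.1.val • yc x f (f - 1) =
        (MvPolynomial.X (kl2 hf) : SP R f) • (xm x b'.val • yc x f (f - 2)) -
        (MvPolynomial.X (kl hf) : SP R f) • (xm x b'.val • yc x f (f - 3)) := by
      rw [algebra_compatible_smul A (MvPolynomial.X (kl2 hf) : SP R f),
        algebra_compatible_smul A (MvPolynomial.X (kl hf) : SP R f), e1, mul_smul]
      have h2 : x (f - 3, f - 2) • yc x f (f - 1) =
          (algebraMap (SP R f) A) (MvPolynomial.X (kl2 hf)) • yc x f (f - 2) -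
          (algebraMap (SP R f) A) (MvPolynomial.X (kl hf)) • yc x f (f - 3) := by
        rw [← sub_eq_zero, ← h1]; abel
      rw [h2]; module
    rw [e2]
    exact sub_mem (Submodule.smul_mem _ _ g1) (Submodule.smul_mem _ _ g2)
  · have g1 : GG x f ⟨⟨_, b.2⟩, false⟩ ∈ NS R x f := Submodule.subset_span ⟨_, rfl⟩
    simp only [GG, G1, Bool.false_eq_true, if_false] at g1
    rw [if_neg ht] at g1
    exact g1

lemma IsModel.NS_eq (h : IsModel R f x) [Algebra (SP R f) A]
    (hT : ∀ s, algebraMap (SP R f) A s = Th x f s) (hf : 4 ≤ f) :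
    NS R x f = (NN x f).restrictScalars (SP R f) := by
  have hle : NS R x f ≤ (NN x f).restrictScalars (SP R f) := by
    rw [NS, Submodule.span_le]
    rintro _ ⟨p, rfl⟩
    exact GG_mem x hf p
  refine le_antisymm hle ?_
  intro n hn
  have hn' : n ∈ NN x f := hn
  have h1 := h.last_mem_MJ hT hf n hn'
  rw [MJ, Submodule.mem_span_range_iff_exists_fun] at h1
  obtain ⟨c, hc⟩ := h1
  have hg : ∑ p, c p • GG x f p ∈ NS R x f :=
    sum_mem (fun p _ => Submodule.smul_mem _ _ (Submodule.subset_span ⟨p, rfl⟩))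
  obtain ⟨t, ht⟩ := h.ker_last hf hT (n - ∑ p, c p • GG x f p) (sub_mem hn' (hle hg)) (by
    rw [Pi.sub_apply, Finset.sum_apply, ← hc, sub_eq_zero]
    rfl)
  rw [sub_eq_iff_eq_add] at ht
  rw [ht]
  exact add_mem (h.smul_last_mem hT hf t) hg

lemma IsModel.GG_indep (h : IsModel R f x) [Algebra (SP R f) A]
    (hT : ∀ s, algebraMap (SP R f) A s = Th x f s) (hf : 4 ≤ f) :
    LinearIndependent (SP R f) (GG x f) := by
  classical
  have hdom : IsDomain A := h.isDomain
  obtain ⟨B, hB⟩ := h.exists_basis hT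
  let w : Bf f × Bool → (Fin f → A) := fun p => B p.1 • yc x f (if p.2 then 1 else 0)
  have hw : ∀ p, ∃ c : Bf f × Bool → SP R f, ∑ q, c q • GG x f q = w p := by
    intro p
    rw [← Submodule.mem_span_range_iff_exists_fun]
    change w p ∈ NS R x f
    rw [h.NS_eq hT hf]
    change w p ∈ NN x f
    refine Submodule.smul_mem _ _ (yc_mem x f _ ?_)
    split_ifs <;> omega
  choose M hM using hw
  refine linIndep_of_matrix w (GG x f) (Matrix.of M) (fun i => (hM i).symm) ?_
  rw [Fintype.linearIndependent_iff]
  intro g hg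
  have hx := h.x_ne_zero (0, 1) (mem_cells.2 (by simp only; omega))
  have hli := Fintype.linearIndependent_iff.1 B.linearIndependent
  have e : ∑ p, g p • w p = (∑ b, g (b, false) • B b) • yc x f 0 +
      (∑ b, g (b, true) • B b) • yc x f 1 := by
    rw [Fintype.sum_prod_type, Finset.sum_smul, Finset.sum_smul, ← Finset.sum_add_distrib]
    refine Finset.sum_congr rfl (fun b _ => ?_)
    rw [Fintype.sum_bool]
    simp only [w, if_true, Bool.false_eq_true, if_false, smul_assoc]
    rw [add_comm]
  rw [e] at hg
  have c0 := congrFun hg ⟨0, by omega⟩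
  have c1 := congrFun hg ⟨1, by omega⟩
  simp only [Pi.add_apply, Pi.smul_apply, smul_eq_mul, yc, Pi.zero_apply, xa_self, mul_zero,
    zero_add, add_zero] at c0 c1
  rw [xa_lt x (by omega)] at c0
  rw [xa_gt x (by omega)] at c1
  have d0 := (mul_eq_zero.1 c0).resolve_right hx
  have d1 := (mul_eq_zero.1 c1).resolve_right (neg_ne_zero.2 hx)
  rintro ⟨b, t⟩
  cases t
  · exact hli _ d1 b
  · exact hli _ d0 b

/-- The column module is finite free over the parameter ring. -/
theorem IsModel.free (h : IsModel R f x) [Algebra (SP R f) A]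
    (hT : ∀ s, algebraMap (SP R f) A s = Th x f s) (hf : 4 ≤ f) :
    Module.Free (SP R f) (NN x f) ∧ Module.Finite (SP R f) (NN x f) := by
  have B := Module.Basis.span (h.GG_indep hT hf)
  have e1 : Submodule.span (SP R f) (Set.range (GG x f)) = (NN x f).restrictScalars (SP R f) :=
    h.NS_eq hT hf
  rw [e1] at B
  have B' : Module.Basis (Bf f × Bool) (SP R f) (NN x f) :=
    B.map (Submodule.restrictScalarsEquiv (SP R f) A _ (NN x f) |>.restrictScalars (SP R f))
  exact ⟨Module.Free.of_basis B', Module.Finite.of_basis B'⟩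
end

/-! ### Vanishing of Ext from a perfect trace form -/

section
variable {S A : Type*} [CommRing S] [CommRing A] [Algebra S A]

lemma IsPerf.eq_zero {σ : A →ₗ[S] S} (hσ : IsPerf σ) {a b : A}
    (h : ∀ c, σ (a * c) = σ (b * c)) : a = b := by
  obtain ⟨e, _, he⟩ := hσ (σ.comp (LinearMap.mulLeft S b))
  rw [he a h, he b (fun c => rfl)]

lemma IsPerf.hom_ext {σ : A →ₗ[S] S} (hσ : IsPerf σ) {Q : Type*} [AddCommGroup Q] [Module A Q]
    {g h : Q →ₗ[A] A} (e : ∀ q, σ (g q) = σ (h q)) : g = h := by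
  ext q
  apply hσ.eq_zero
  intro c
  have := e (c • q)
  rw [g.map_smul, h.map_smul, smul_eq_mul, smul_eq_mul] at this
  rw [mul_comm, this, mul_comm]

lemma IsPerf.lift {σ : A →ₗ[S] S} (hσ : IsPerf σ) {Q : Type*} [AddCommGroup Q] [Module A Q]
    [Module S Q] [IsScalarTower S A Q] (τ : Q →ₗ[S] S) :
    ∃ h : Q →ₗ[A] A, ∀ q, σ (h q) = τ q := by
  have ex : ∀ q : Q, ∃ a, ∀ c, σ (a * c) = τ (c • q) := fun q =>
    (hσ (τ.comp ((LinearMap.toSpanSingleton A Q q).restrictScalars S))).exists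
  choose h hh using ex
  refine ⟨⟨⟨h, ?_⟩, ?_⟩, ?_⟩
  · intro p q
    apply hσ.eq_zero
    intro c
    rw [hh, add_mul, map_add, hh, hh, smul_add, map_add]
  · intro r q
    apply hσ.eq_zero
    intro c
    have := hh q (c * r)
    simp only [RingHom.id_apply, smul_eq_mul]
    rw [hh, smul_smul, ← this]
    congr 1; ring
  · intro q
    have := hh q 1
    rw [mul_one, one_smul] at this
    exact this

lemma IsPerf.extend {σ : A →ₗ[S] S} (hσ : IsPerf σ) {Q : Type*} [AddCommGroup Q] [Module A Q]
    [Module S Q] [IsScalarTower S A Q] (K : Submodule A Q) (r : Q →ₗ[S] K)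
    (hr : ∀ k : K, r k = k) (g : K →ₗ[A] A) : ∃ h : Q →ₗ[A] A, ∀ k : K, h k = g k := by
  obtain ⟨h, hh⟩ := hσ.lift ((σ.comp (g.restrictScalars S)).comp r)
  refine ⟨h, fun k => ?_⟩
  have : h.comp K.subtype = g := by
    apply hσ.hom_ext
    intro q
    change σ (h (q : Q)) = _
    rw [hh]
    simp [hr]
  exact DFunLike.congr_fun this k

lemma IsPerf.factor {σ : A →ₗ[S] S} (hσ : IsPerf σ) {P Q : Type*} [AddCommGroup P] [Module A P]
    [AddCommGroup Q] [Module A Q]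
    [Module S Q] [IsScalarTower S A Q] (d : P →ₗ[A] Q) (r : Q →ₗ[S] LinearMap.range d)
    (hr : ∀ k : LinearMap.range d, r k = k) (g : P →ₗ[A] A) (hg : LinearMap.ker d ≤ LinearMap.ker g) :
    ∃ h : Q →ₗ[A] A, h.comp d = g := by
  obtain ⟨h, hh⟩ := hσ.extend _ r hr
    (((LinearMap.ker d).liftQ g hg).comp d.quotKerEquivRange.symm.toLinearMap)
  refine ⟨h, ?_⟩
  ext p
  have h1 := hh (d.quotKerEquivRange (Submodule.Quotient.mk p))
  rw [LinearMap.comp_apply, LinearEquiv.coe_coe, LinearEquiv.symm_apply_apply] at h1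
  simpa using h1

/-- Dual modules. -/
lemma IsPerf.dual_projective {σ : A →ₗ[S] S} (hσ : IsPerf σ) {Q : Type*} [AddCommGroup Q]
    [Module A Q] [Module S Q] [IsScalarTower S A Q] [Module.Free S Q] [Module.Finite S Q] :
    Module.Projective S (Module.Dual A Q) := by
  let φ : Module.Dual A Q →ₗ[S] Module.Dual S Q :=
    { toFun := fun g => σ.comp (g.restrictScalars S)
      map_add' := fun g h => by ext q; simp
      map_smul' := fun s g => by ext q; simp }
  have hb : Function.Bijective φ := by
    constructor
    · intro g h e
      exact hσ.hom_ext (fun q => DFunLike.congr_fun e q)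
    · intro τ
      obtain ⟨h, hh⟩ := hσ.lift τ
      exact ⟨h, LinearMap.ext hh⟩
  have : Module.Projective S (Module.Dual S Q) := inferInstance
  exact Module.Projective.of_equiv (LinearEquiv.ofBijective φ hb).symm

/-- One step of the syzygy induction. -/
lemma syz_step {P Q : Type*} [AddCommGroup P] [Module A P] [AddCommGroup Q] [Module A Q]
    [Module S Q] [IsScalarTower S A Q] [Module S P] [IsScalarTower S A P] [Module.Projective S P]
    (d : P →ₗ[A] Q) (hd : Module.Projective S (LinearMap.range d)) (K : Submodule A P)
    (hK : K = LinearMap.ker d) :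
    Module.Projective S K ∧ ∃ r : P →ₗ[S] K, ∀ k : K, r k = k := by
  subst hK
  obtain ⟨s, hs⟩ := Module.projective_lifting_property
    (d.rangeRestrict.restrictScalars S) LinearMap.id d.surjective_rangeRestrict
  have hs' : ∀ y, d.rangeRestrict (s y) = y := fun y => DFunLike.congr_fun hs y
  let r0 : P →ₗ[S] P := LinearMap.id - s.comp (d.rangeRestrict.restrictScalars S)
  have hr0 : ∀ p, r0 p ∈ (LinearMap.ker d).restrictScalars S := by
    intro p
    change d (p - s (d.rangeRestrict p)) = 0
    have := congrArg Subtype.val (hs' (d.rangeRestrict p))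
    rw [map_sub, sub_eq_zero]
    exact this.symm
  let r : P →ₗ[S] LinearMap.ker d := LinearMap.codRestrict ((LinearMap.ker d).restrictScalars S) r0 hr0
  have hr : ∀ k : LinearMap.ker d, r k = k := by
    intro k
    apply Subtype.ext
    change (k : P) - s (d.rangeRestrict (k : P)) = k
    have : d.rangeRestrict (k : P) = 0 := Subtype.ext k.2
    rw [this, map_zero, sub_zero]
  refine ⟨?_, r, hr⟩
  exact Module.Projective.of_split ((LinearMap.ker d).subtype.restrictScalars S) r
    (LinearMap.ext hr)
end

lemma projective_trans {S A : Type*} [CommRing S] [CommRing A] [Algebra S A] [Module.Free S A]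
    (P : Type*) [AddCommGroup P] [Module A P] [Module S P] [IsScalarTower S A P]
    [hP : Module.Projective A P] : Module.Projective S P := by
  obtain ⟨s, hs⟩ := hP.out
  exact Module.Projective.of_split (s.restrictScalars S)
    ((Finsupp.linearCombination A id).restrictScalars S) (LinearMap.ext hs)

theorem ext_vanish {S A : Type u} [CommRing S] [CommRing A] [Algebra S A] [Module.Free S A]
    (σ : A →ₗ[S] S) (hσ : IsPerf σ) (M : Type u) [AddCommGroup M] [Module A M] [Module S M]
    [IsScalarTower S A M] [hM : Module.Projective S M] (i : ℕ) (hi : 0 < i) :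
    Subsingleton (((Ext A (ModuleCat.{u} A) i).obj (Opposite.op (ModuleCat.of A M))).obj
      (ModuleCat.of A A)) := by
  obtain ⟨n, rfl⟩ : ∃ n, i = n + 1 := ⟨i - 1, by omega⟩
  obtain ⟨P⟩ := (inferInstance : HasProjectiveResolution (ModuleCat.of A M)).out
  let inst : ∀ k, Module S (P.complex.X k) := fun k => Module.compHom _ (algebraMap S A)
  have tow : ∀ k, IsScalarTower S A (P.complex.X k) := fun k =>
    ⟨fun s a m => by
      rw [Algebra.smul_def, mul_smul]; rfl⟩
  have hprojA : ∀ k, Module.Projective A (P.complex.X k) := fun k =>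
    (IsProjective.iff_projective _).2 (P.projective k)
  have hproj : ∀ k, Module.Projective S (P.complex.X k) := fun k => projective_trans (A := A) _
  let d : ∀ k, P.complex.X (k + 1) →ₗ[A] P.complex.X k := fun k => (P.complex.d (k + 1) k).hom
  have hex : ∀ k, LinearMap.range (d (k + 1)) = LinearMap.ker (d k) := by
    intro k
    have := P.exact_succ k
    rw [ShortComplex.moduleCat_exact_iff_range_eq_ker] at this
    exact this
  have key : ∀ k, Module.Projective S (LinearMap.range (d k)) ∧
      ∃ r : P.complex.X k →ₗ[S] LinearMap.range (d k), ∀ y : LinearMap.range (d k), r y = y := by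
    intro k
    induction k with
    | zero =>
      let π : P.complex.X 0 →ₗ[A] M := (P.π.f 0).hom
      have hsurj : Function.Surjective π := (ModuleCat.epi_iff_surjective _).1
        (inferInstance : Epi (P.π.f 0))
      refine syz_step π ?_ _ ?_
      · let e : LinearMap.range π ≃ₗ[S] M :=
          ((LinearEquiv.ofEq _ _ (LinearMap.range_eq_top.2 hsurj)).trans
            Submodule.topEquiv).restrictScalars S
        exact Module.Projective.of_equiv e.symm
      · have := P.exact₀
        rw [ShortComplex.moduleCat_exact_iff_range_eq_ker] at this
        exact this
    | succ k ih => exact syz_step (d k) ih.1 _ (hex k)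
  have hz : Limits.IsZero (((Ext A (ModuleCat.{u} A) (n + 1)).obj
      (Opposite.op (ModuleCat.of A M))).obj (ModuleCat.of A A)) := by
    refine Limits.IsZero.of_iso ?_ (P.isoExt (n + 1) (ModuleCat.of A A))
    rw [← HomologicalComplex.exactAt_iff_isZero_homology,
      HomologicalComplex.exactAt_iff' _ n (n + 1) (n + 2) (by simp) (by simp),
      ShortComplex.moduleCat_exact_iff]
    intro (g : P.complex.X (n + 1) ⟶ ModuleCat.of A A) hg
    have hg' : P.complex.d (n + 2) (n + 1) ≫ g = 0 := hg
    obtain ⟨r, hr⟩ := (key n).2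
    obtain ⟨h, hh⟩ := hσ.factor (d n) r hr g.hom (by
      rw [← hex n]
      rintro _ ⟨y, rfl⟩
      exact DFunLike.congr_fun (congrArg ModuleCat.Hom.hom hg') y)
    refine ⟨(ModuleCat.ofHom h : P.complex.X n ⟶ ModuleCat.of A A), ?_⟩
    change P.complex.d (n + 1) n ≫ ModuleCat.ofHom h = g
    ext1
    exact hh
  exact ModuleCat.subsingleton_of_isZero hz

lemma XA_eq (R : Type u) [CommRing R] (f : ℕ) (i j : Fin f) : XA R f i j = xa (xq R f) i j := by
  rcases lt_trichotomy i j with h | h | h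
  · rw [xa_lt _ (by exact h), xq_eq R f i j h, XA, xv_lt R f i j h]
  · subst h
    rw [xa_self]
    simp [XA, xv]
  · rw [xa_gt _ (by exact h), xq_eq R f j i h, XA, xv, dif_neg (not_lt.2 h.le), dif_pos h, map_neg]

lemma NA_eq (R : Type u) [CommRing R] (f : ℕ) : NA R f = NN (xq R f) f := by
  rw [NA, Matrix.range_mulVecLin, NN]
  congr 2
  funext j i
  exact XA_eq R f i j

/-- if `R₀` is a Gorenstein domain and `f ≥ 4`, then
`Ext^i_A(N, A) = 0` for all `i > 0`, and likewise `Ext^i_A(N*, A) = 0` for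
all `i > 0` (where `N* ≅ N`); consequently a free resolution of `N` spliced
with the dual of a free resolution of `N* ≅ N` is a totally acyclic complex
of free `A`-modules. -/
theorem stmt_10 (R₀ : Type u) [CommRing R₀] [IsDomain R₀]
    (hGor : IsGorensteinRing R₀) (f : ℕ) (hf : 4 ≤ f) :
    (∀ i : ℕ, 0 < i →
        Subsingleton
          (((Ext (MvPolynomial (P2 f) R₀ ⧸ Pf4 R₀ f)
                (ModuleCat.{u} (MvPolynomial (P2 f) R₀ ⧸ Pf4 R₀ f)) i).obj
              (Opposite.op (ModuleCat.of _ (NA R₀ f)))).obj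
            (ModuleCat.of _ (MvPolynomial (P2 f) R₀ ⧸ Pf4 R₀ f)))) ∧
      (∀ i : ℕ, 0 < i →
        Subsingleton
          (((Ext (MvPolynomial (P2 f) R₀ ⧸ Pf4 R₀ f)
                (ModuleCat.{u} (MvPolynomial (P2 f) R₀ ⧸ Pf4 R₀ f)) i).obj
              (Opposite.op (ModuleCat.of _
                (Module.Dual (MvPolynomial (P2 f) R₀ ⧸ Pf4 R₀ f) (NA R₀ f))))).obj
            (ModuleCat.of _ (MvPolynomial (P2 f) R₀ ⧸ Pf4 R₀ f)))) := by
  rw [NA_eq]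
  let _ : Algebra (SP R₀ f) (AQ R₀ f) := (Th (xq R₀ f) f).toRingHom.toAlgebra
  have hT : ∀ s, algebraMap (SP R₀ f) (AQ R₀ f) s = Th (xq R₀ f) f s := fun _ => rfl
  have hM := isModel_AQ R₀ f
  obtain ⟨B, hB⟩ := hM.exists_basis hT
  have hσ := perf_AQ R₀ f (by omega) hT B hB
  have hfree : Module.Free (SP R₀ f) (AQ R₀ f) := Module.Free.of_basis B
  obtain ⟨h1, h2⟩ := hM.free hT hf
  have h3 : Module.Projective (SP R₀ f) (Module.Dual (AQ R₀ f) (NN (xq R₀ f) f)) :=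
    hσ.dual_projective
  exact ⟨fun i hi => ext_vanish _ hσ _ i hi, fun i hi => ext_vanish _ hσ _ i hi⟩

end AluffiStmt
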